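/- arXiv:1506.06932 — 8 statements merged into one kernel-verified Lean document; each statement's English description precedes it below -/
import Mathlib

section
/- Let u, u' ∈ ℝ^N satisfy the RSS step (u' − u)/Δt + τ B(u' − u) = −A u for some Δt > 0. If τ ≥ β/2, then ⟨A u', u'⟩ ≤ ⟨A u, u⟩; that is, the RSS scheme is unconditionally energy stable. -/
open Matrix

/-!
With increment `d = u' - u` and preconditioner `P = I / Δt + τ B`, the scheme reads `P d = -A u`.
Since `A` is symmetric, expanding the energy at `u' = u + d` gives
`⟨A u', u'⟩ - ⟨A u, u⟩ = 2 ⟨A u, d⟩ + ⟨A d, d⟩ = -⟨(2 P - A) d, d⟩`,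
which is nonpositive because `A ≤ β B ≤ 2 τ B ≤ 2 P` as quadratic forms. The scheme enters
only in weak form, as `p v d = -a v u` for bilinear forms `a` and `p`, tested against `v = d`.
-/

open LinearMap (BilinForm)

section EnergyDecay

variable {R M : Type*} [CommRing R] [AddCommGroup M] [Module R M]
  {a p : BilinForm R M} {u u' : M}

theorem energy_sub_energy_eq_of_preconditioned_step (ha : a.IsSymm)
    (hstep : p (u' - u) (u' - u) = -a (u' - u) u) :
    a u' u' - a u u = -((2 : R) • p - a) (u' - u) (u' - u) := by
  have hcross : p (u' - u) (u' - u) = a u u - a u u' := by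
    rw [hstep, map_sub, LinearMap.sub_apply, ha.eq u' u, neg_sub]
  have hself : a (u' - u) (u' - u) = a u' u' - 2 * a u u' + a u u := by
    simp only [map_sub, LinearMap.sub_apply, ha.eq u' u]
    ring
  rw [LinearMap.sub_apply, LinearMap.sub_apply, LinearMap.smul_apply, LinearMap.smul_apply,
    smul_eq_mul, hcross, hself]
  ring

theorem energy_le_of_preconditioned_step [PartialOrder R] [IsOrderedAddMonoid R] (ha : a.IsSymm)
    (hpa : ((2 : R) • p - a).IsNonneg) (hstep : p (u' - u) (u' - u) = -a (u' - u) u) :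
    a u' u' ≤ a u u := by
  rw [← sub_nonpos, energy_sub_energy_eq_of_preconditioned_step ha hstep]
  exact neg_nonpos.2 (hpa.nonneg _)

end EnergyDecay

section ResidualSmoothing

variable {K V : Type*} [Field K] [AddCommGroup V] [Module K V]
  {a b m : BilinForm K V} {β τ Δt : K} {u u' : V}

/-- The preconditioner of the residual smoothing scheme, `P = I / Δt + τ B` in matrix notation,
as a bilinear form; the mass form `m` stands for the Euclidean inner product and `b` for the
matrix `B`. -/
def rssForm (m b : BilinForm K V) (τ Δt : K) : BilinForm K V :=
  (1 / Δt) • m + τ • b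

variable [LinearOrder K] [IsStrictOrderedRing K]

theorem isNonneg_two_smul_rssForm_sub (hm : m.IsNonneg) (hb : b.IsNonneg)
    (hab : ∀ v, a v v ≤ β * b v v) (hΔt : 0 < Δt) (hτβ : β / 2 ≤ τ) :
    ((2 : K) • rssForm m b τ Δt - a).IsNonneg where
  nonneg v := by
    have hmass : 0 ≤ 1 / Δt * m v v := mul_nonneg (one_div_pos.2 hΔt).le (hm.nonneg v)
    have hsmooth : a v v ≤ 2 * τ * b v v :=
      (hab v).trans (mul_le_mul_of_nonneg_right (by linarith) (hb.nonneg v))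
    simp only [rssForm, LinearMap.sub_apply, LinearMap.smul_apply, LinearMap.add_apply, smul_eq_mul]
    linarith

theorem rss_unconditional_energy_stability_general (ha : a.IsSymm) (hm : m.IsNonneg)
    (hb : b.IsNonneg) (hab : ∀ v, a v v ≤ β * b v v) (hΔt : 0 < Δt) (hτβ : β / 2 ≤ τ)
    (hstep : ∀ v, (1 / Δt) * m v (u' - u) + τ * b v (u' - u) = -a v u) :
    a u' u' ≤ a u u :=
  energy_le_of_preconditioned_step ha (isNonneg_two_smul_rssForm_sub hm hb hab hΔt hτβ)
    (hstep _)

end ResidualSmoothing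

section MatrixForms

variable {R n : Type*} [CommRing R] [Fintype n] [DecidableEq n]

theorem toBilin'_apply_eq_mulVec_dotProduct (A : Matrix n n R) (v w : n → R) :
    toBilin' A v w = A *ᵥ w ⬝ᵥ v := by
  rw [toBilin'_apply', dotProduct_comm]

theorem isNonneg_toBilin'_of_posSemidef [PartialOrder R] [StarRing R] [TrivialStar R]
    {A : Matrix n n R} (hA : A.PosSemidef) : (toBilin' A).IsNonneg where
  nonneg v := by simpa [toBilin'_apply'] using hA.dotProduct_mulVec_nonneg v

theorem rss_step_toBilin' {K : Type*} [Field K] {A B : Matrix n n K} {τ Δt : K} {u u' : n → K}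
    (hstep : (1 / Δt) • (u' - u) + τ • B *ᵥ (u' - u) = -(A *ᵥ u)) (v : n → K) :
    (1 / Δt) * toBilin' 1 v (u' - u) + τ * toBilin' B v (u' - u) = -toBilin' A v u := by
  simp only [toBilin'_apply_eq_mulVec_dotProduct, one_mulVec, ← smul_eq_mul, ← smul_dotProduct,
    ← add_dotProduct, ← neg_dotProduct, hstep]

end MatrixForms

/-- If `τ ≥ β/2`, one RSS step
`(u' − u)/Δt + τ B (u' − u) = − A u` satisfies `⟨A u', u'⟩ ≤ ⟨A u, u⟩`
for every `Δt > 0` (unconditional energy stability). -/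
theorem rss_unconditional_energy_stability
    {N : ℕ} (hN : 0 < N) (A B : Matrix (Fin N) (Fin N) ℝ)
    (hA : A.PosDef) (hB : B.PosDef)
    (α β : ℝ) (hα : 0 < α) (hαβ : α ≤ β)
    (hlow : ∀ u : Fin N → ℝ, α * (B.mulVec u ⬝ᵥ u) ≤ A.mulVec u ⬝ᵥ u)
    (hup : ∀ u : Fin N → ℝ, A.mulVec u ⬝ᵥ u ≤ β * (B.mulVec u ⬝ᵥ u))
    (τ Δt : ℝ) (hτ : 0 < τ) (hΔt : 0 < Δt)
    (hτβ : β / 2 ≤ τ)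
    (u u' : Fin N → ℝ)
    (hstep : (1 / Δt) • (u' - u) + τ • B.mulVec (u' - u) = -(A.mulVec u)) :
    A.mulVec u' ⬝ᵥ u' ≤ A.mulVec u ⬝ᵥ u := by
  have hA_symm : (toBilin' A).IsSymm :=
    isSymm_toBilin'_iff_isSymm.2 (isHermitian_iff_isSymm.1 hA.isHermitian)
  simp only [← toBilin'_apply_eq_mulVec_dotProduct] at hup ⊢
  exact rss_unconditional_energy_stability_general hA_symm
    (isNonneg_toBilin'_of_posSemidef .one) (isNonneg_toBilin'_of_posSemidef hB.posSemidef)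
    hup hΔt hτβ (rss_step_toBilin' hstep)
end

section
/- Let u, u' ∈ ℝ^N satisfy the RSS step (u' − u)/Δt + τ B(u' − u) = −A u. If τ < β/2 and 0 < Δt < 2/((1 − 2τ/β)·ρ(A)), then ⟨A u', u'⟩ ≤ ⟨A u, u⟩. -/
open Matrix

/-!
Put `d = u' - u`. Pairing the scheme with `d` eliminates the cross term of the quadratic energy:
`⟨A u', u'⟩ - ⟨A u, u⟩ = 2 ⟨A u, d⟩ + ⟨A d, d⟩ = ⟨A d, d⟩ - 2 τ ⟨B d, d⟩ - (2 / Δt) ‖d‖²`.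
The bound `A ≤ β B` absorbs the stabilization into `(1 - 2 τ / β) ⟨A d, d⟩`, and the Rayleigh bound
`⟨A d, d⟩ ≤ ρ(A) ‖d‖²` makes the right-hand side nonpositive under the step restriction.
-/

section RayleighBound

variable {𝕜 n : Type*} [RCLike 𝕜] [Fintype n] [DecidableEq n] {A : Matrix n n 𝕜}

open scoped ComplexOrder MatrixOrder Matrix.Norms.L2Operator in
lemma posSemidef_algebraMap_sub_of_eigenvalues_le (hA : A.IsHermitian) {r : ℝ}
    (hr : ∀ i, hA.eigenvalues i ≤ r) : (algebraMap ℝ (Matrix n n 𝕜) r - A).PosSemidef := by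
  refine Matrix.le_iff.mp (le_algebraMap_of_spectrum_le (fun x hx => ?_) hA)
  rw [hA.spectrum_real_eq_range_eigenvalues] at hx
  obtain ⟨i, rfl⟩ := hx
  exact hr i

lemma re_dotProduct_mulVec_le_of_eigenvalues_le (hA : A.IsHermitian) {r : ℝ}
    (hr : ∀ i, hA.eigenvalues i ≤ r) (x : n → 𝕜) :
    RCLike.re (star x ⬝ᵥ A *ᵥ x) ≤ r * RCLike.re (star x ⬝ᵥ x) := by
  have hnonneg := (posSemidef_algebraMap_sub_of_eigenvalues_le hA hr).re_dotProduct_nonneg x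
  rwa [Algebra.algebraMap_eq_smul_one, sub_mulVec, smul_mulVec, one_mulVec, dotProduct_sub,
    dotProduct_smul, map_sub, RCLike.smul_re, sub_nonneg] at hnonneg

end RayleighBound

lemma mulVec_add_dotProduct_add_of_isSymm {R n : Type*} [CommSemiring R] [Fintype n]
    {A : Matrix n n R} (hA : A.IsSymm) (u d : n → R) :
    A *ᵥ (u + d) ⬝ᵥ (u + d) = A *ᵥ u ⬝ᵥ u + 2 * (A *ᵥ u ⬝ᵥ d) + A *ᵥ d ⬝ᵥ d := by
  have hcross : A *ᵥ d ⬝ᵥ u = A *ᵥ u ⬝ᵥ d := by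
    rw [dotProduct_comm, dotProduct_mulVec, ← mulVec_transpose, hA.eq]
  rw [mulVec_add, add_dotProduct, dotProduct_add, dotProduct_add, hcross]
  ring

/-- One step `(u' - u) / Δt + τ B (u' - u) = -A u` of the RSS (residual smoothing) scheme for the
discretized heat equation. The quotient by `Δt` is encoded as scaling by `1 / Δt`, so the notion is
only meaningful for `Δt ≠ 0`. -/
def IsRSSStep {K n : Type*} [Field K] [Fintype n] (A B : Matrix n n K) (τ Δt : K)
    (u u' : n → K) : Prop :=
  (1 / Δt) • (u' - u) + τ • B *ᵥ (u' - u) = -(A *ᵥ u)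

namespace IsRSSStep

variable {K n : Type*} [Field K] [Fintype n] {A B : Matrix n n K} {τ Δt : K} {u u' : n → K}

lemma mulVec_dotProduct_sub (h : IsRSSStep A B τ Δt u u') :
    A *ᵥ u ⬝ᵥ (u' - u) =
      -(1 / Δt * ((u' - u) ⬝ᵥ (u' - u)) + τ * (B *ᵥ (u' - u) ⬝ᵥ (u' - u))) := by
  have hstep : (1 / Δt) • (u' - u) + τ • B *ᵥ (u' - u) = -(A *ᵥ u) := h
  rw [← neg_eq_iff_eq_neg, ← neg_dotProduct, ← hstep, add_dotProduct, smul_dotProduct,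
    smul_dotProduct, smul_eq_mul, smul_eq_mul]

lemma energy_eq (h : IsRSSStep A B τ Δt u u') (hA : A.IsSymm) :
    A *ᵥ u' ⬝ᵥ u' = A *ᵥ u ⬝ᵥ u + (A *ᵥ (u' - u) ⬝ᵥ (u' - u)
      - 2 * τ * (B *ᵥ (u' - u) ⬝ᵥ (u' - u)) - 2 / Δt * ((u' - u) ⬝ᵥ (u' - u))) := by
  have hexpand := mulVec_add_dotProduct_add_of_isSymm hA u (u' - u)
  rw [add_sub_cancel, h.mulVec_dotProduct_sub] at hexpand
  rw [hexpand]
  ring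

variable [LinearOrder K] [IsStrictOrderedRing K] {β ρ : K}

lemma energy_le (h : IsRSSStep A B τ Δt u u') (hA : A.IsSymm) (hβ : 0 < β)
    (hAB : ∀ v, A *ᵥ v ⬝ᵥ v ≤ β * (B *ᵥ v ⬝ᵥ v)) (hρ : ∀ v, A *ᵥ v ⬝ᵥ v ≤ ρ * (v ⬝ᵥ v))
    (hτ : 0 ≤ τ) (hτβ : τ ≤ β / 2) (hΔt : 0 < Δt) (hstable : Δt * ((1 - 2 * τ / β) * ρ) ≤ 2) :
    A *ᵥ u' ⬝ᵥ u' ≤ A *ᵥ u ⬝ᵥ u := by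
  rw [h.energy_eq hA, add_le_iff_nonpos_right, sub_nonpos]
  set d := u' - u
  have hcoef : 0 ≤ 1 - 2 * τ / β := by
    rw [sub_nonneg, div_le_one hβ]
    linarith
  have hstabilization : 2 * τ / β * (A *ᵥ d ⬝ᵥ d) ≤ 2 * τ * (B *ᵥ d ⬝ᵥ d) :=
    calc 2 * τ / β * (A *ᵥ d ⬝ᵥ d)
        ≤ 2 * τ / β * (β * (B *ᵥ d ⬝ᵥ d)) := by gcongr; exact hAB d
      _ = 2 * τ * (B *ᵥ d ⬝ᵥ d) := by field_simp
  have hsq : 0 ≤ d ⬝ᵥ d := Finset.sum_nonneg fun i _ => mul_self_nonneg (d i)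
  calc A *ᵥ d ⬝ᵥ d - 2 * τ * (B *ᵥ d ⬝ᵥ d)
      ≤ (1 - 2 * τ / β) * (A *ᵥ d ⬝ᵥ d) := by linarith
    _ ≤ (1 - 2 * τ / β) * (ρ * (d ⬝ᵥ d)) := by gcongr; exact hρ d
    _ = (1 - 2 * τ / β) * ρ * (d ⬝ᵥ d) := by ring
    _ ≤ 2 / Δt * (d ⬝ᵥ d) := by gcongr; rwa [le_div_iff₀' hΔt]

end IsRSSStep

theorem rss_conditional_energy_stability_general {n : Type*} [Fintype n] [DecidableEq n]
    {A B : Matrix n n ℝ} (hA : A.IsHermitian) {β τ Δt : ℝ} (hβ : 0 < β)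
    (hAB : ∀ v, A *ᵥ v ⬝ᵥ v ≤ β * (B *ᵥ v ⬝ᵥ v)) (hτ : 0 ≤ τ) (hτβ : τ ≤ β / 2)
    (hΔt : 0 < Δt) (hstable : Δt * ((1 - 2 * τ / β) * ⨆ i, hA.eigenvalues i) ≤ 2)
    {u u' : n → ℝ} (hstep : IsRSSStep A B τ Δt u u') :
    A *ᵥ u' ⬝ᵥ u' ≤ A *ᵥ u ⬝ᵥ u := by
  have hrayleigh (v : n → ℝ) : A *ᵥ v ⬝ᵥ v ≤ (⨆ i, hA.eigenvalues i) * (v ⬝ᵥ v) := by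
    rw [dotProduct_comm]
    exact re_dotProduct_mulVec_le_of_eigenvalues_le hA
      (le_ciSup (Set.finite_range hA.eigenvalues).bddAbove) v
  exact hstep.energy_le (isHermitian_iff_isSymm.mp hA) hβ hAB hrayleigh hτ hτβ hΔt hstable

/-- If `τ < β/2` and `0 < Δt < 2/((1 − 2τ/β)·ρ(A))`, where `ρ(A)` is
the largest eigenvalue of `A`, then one RSS step
`(u' − u)/Δt + τ B (u' − u) = − A u` satisfies `⟨A u', u'⟩ ≤ ⟨A u, u⟩`. -/
theorem rss_conditional_energy_stability
    {N : ℕ} (hN : 0 < N) (A B : Matrix (Fin N) (Fin N) ℝ)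
    (hA : A.PosDef) (hB : B.PosDef)
    (α β : ℝ) (hα : 0 < α) (hαβ : α ≤ β)
    (hlow : ∀ u : Fin N → ℝ, α * (B.mulVec u ⬝ᵥ u) ≤ A.mulVec u ⬝ᵥ u)
    (hup : ∀ u : Fin N → ℝ, A.mulVec u ⬝ᵥ u ≤ β * (B.mulVec u ⬝ᵥ u))
    (τ Δt : ℝ) (hτ : 0 < τ)
    (hτβ : τ < β / 2)
    (hΔt : 0 < Δt)
    (hΔt2 : Δt < 2 / ((1 - 2 * τ / β) * (⨆ i, hA.1.eigenvalues i)))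
    (u u' : Fin N → ℝ)
    (hstep : (1 / Δt) • (u' - u) + τ • B.mulVec (u' - u) = -(A.mulVec u)) :
    A.mulVec u' ⬝ᵥ u' ≤ A.mulVec u ⬝ᵥ u := by
  have hden := (div_pos_iff_of_pos_left two_pos).mp (hΔt.trans hΔt2)
  exact rss_conditional_energy_stability_general hA.1 (hα.trans_le hαβ) hup hτ.le hτβ.le hΔt
    ((lt_div_iff₀ hden).mp hΔt2).le hstep
end

section
/- Let u^(k) be the RSS sequence defined by (u^(k+1) − u^(k))/Δt + τ B(u^(k+1) − u^(k)) = f − A u^(k), and v^(k) the backward Euler sequence defined by (v^(k+1) − v^(k))/Δt + A v^(k+1) = f, with u^(0) = v^(0). Let M = I − Δt (I + τΔt B)⁻¹ A and assume ‖M‖ < 1. Then there exists γ ∈ [0,1) such that for all k ≥ 0, ‖u^(k) − v^(k)‖ ≤ Δt² · ‖τB − A‖ · (1/(1 − γ)) · ‖f − A v^(0)‖. -/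
open Matrix

/-- The Euclidean norm of a vector of `ℝ^N`. -/
noncomputable def vnorm {N : ℕ} (w : Fin N → ℝ) : ℝ :=
  Real.sqrt (w ⬝ᵥ w)

/-- The operator norm of a matrix, induced by the Euclidean norm. -/
noncomputable def mopNorm {N : ℕ} (C : Matrix (Fin N) (Fin N) ℝ) : ℝ :=
  ‖LinearMap.toContinuousLinearMap (Matrix.toEuclideanLin C)‖

/-! The backward Euler sequence satisfies the RSS recursion up to a defect: with `P = 1 + τ Δt B`
and the residuals `rₖ = f - A vₖ`, one has `P (vₖ₊₁ - vₖ) = Δt rₖ + Δt² (τ B - A) rₖ₊₁`, because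
`vₖ₊₁ - vₖ = Δt rₖ₊₁`. As `P M = P - Δt A`, the error `eₖ = uₖ - vₖ` obeys
`P (eₖ₊₁ - M eₖ) = -Δt² (τ B - A) rₖ₊₁`. Accretivity enters twice: that of `B` gives `‖x‖ ≤ ‖P x‖`,
so `P` may be dropped from the left-hand side, and that of `A` makes `‖rₖ‖` nonincreasing, since
`(1 + Δt A) rₖ₊₁ = rₖ`. Hence `‖eₖ₊₁‖ ≤ ‖M‖ ‖eₖ‖ + Δt² ‖τ B - A‖ ‖r₀‖`, and a geometric series
concludes. -/

section Schemes

variable {𝕜 V : Type*} [Field 𝕜] [AddCommGroup V] [Module 𝕜 V]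
  {A B : V →ₗ[𝕜] V} {f : V} {τ Δt : 𝕜} {u v : ℕ → V}

/-- `u` follows the RSS scheme for `du/dt + A u = f` with preconditioner `B`, stabilisation
parameter `τ` and time step `Δt`. -/
def IsRSS (A B : V →ₗ[𝕜] V) (f : V) (τ Δt : 𝕜) (u : ℕ → V) : Prop :=
  ∀ k, (1 / Δt) • (u (k + 1) - u k) + τ • B (u (k + 1) - u k) = f - A (u k)

/-- `v` follows the backward Euler scheme for `dv/dt + A v = f` with time step `Δt`. -/
def IsBackwardEuler (A : V →ₗ[𝕜] V) (f : V) (Δt : 𝕜) (v : ℕ → V) : Prop :=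
  ∀ k, (1 / Δt) • (v (k + 1) - v k) + A (v (k + 1)) = f

theorem IsRSS.preconditioner_increment (hu : IsRSS A B f τ Δt u) (hΔt : Δt ≠ 0) (k : ℕ) :
    (1 + (τ * Δt) • B) (u (k + 1) - u k) = Δt • (f - A (u k)) := by
  rw [← hu k, smul_add, smul_smul, mul_one_div_cancel hΔt, smul_smul, mul_comm Δt τ, one_smul]
  rfl

theorem IsBackwardEuler.increment (hv : IsBackwardEuler A f Δt v) (hΔt : Δt ≠ 0) (k : ℕ) :
    v (k + 1) - v k = Δt • (f - A (v (k + 1))) := by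
  rw [← eq_sub_of_add_eq (hv k), smul_smul, mul_one_div_cancel hΔt, one_smul]

theorem IsBackwardEuler.residual_succ_add (hv : IsBackwardEuler A f Δt v) (hΔt : Δt ≠ 0) (k : ℕ) :
    f - A (v (k + 1)) + Δt • A (f - A (v (k + 1))) = f - A (v k) := by
  rw [← map_smul, ← hv.increment hΔt, map_sub]
  abel

theorem IsBackwardEuler.preconditioner_increment (hv : IsBackwardEuler A f Δt v) (hΔt : Δt ≠ 0)
    (B : V →ₗ[𝕜] V) (τ : 𝕜) (k : ℕ) :
    (1 + (τ * Δt) • B) (v (k + 1) - v k) =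
      Δt • (f - A (v k)) + Δt ^ 2 • (τ • B - A) (f - A (v (k + 1))) := by
  rw [← hv.residual_succ_add hΔt, hv.increment hΔt]
  simp only [LinearMap.add_apply, LinearMap.sub_apply, LinearMap.smul_apply, Module.End.one_apply,
    map_smul]
  module

theorem IsRSS.preconditioner_error (hu : IsRSS A B f τ Δt u) (hv : IsBackwardEuler A f Δt v)
    (hΔt : Δt ≠ 0) {M : V →ₗ[𝕜] V}
    (hM : (1 + (τ * Δt) • B) * M = 1 + (τ * Δt) • B - Δt • A) (k : ℕ) :
    (1 + (τ * Δt) • B) (u (k + 1) - v (k + 1) - M (u k - v k)) =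
      -(Δt ^ 2 • (τ • B - A) (f - A (v (k + 1)))) := by
  have hMe : (1 + (τ * Δt) • B) (M (u k - v k)) =
      (1 + (τ * Δt) • B) (u k - v k) - Δt • A (u k - v k) :=
    LinearMap.congr_fun hM (u k - v k)
  calc
    _ = (1 + (τ * Δt) • B) (u (k + 1) - u k) - (1 + (τ * Δt) • B) (v (k + 1) - v k)
        + Δt • A (u k - v k) := by
      rw [map_sub, hMe]
      simp only [map_sub]
      abel
    _ = _ := by
      rw [hu.preconditioner_increment hΔt, hv.preconditioner_increment hΔt B τ, map_sub A]
      module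

end Schemes

section Accretive

variable {E : Type*} [SeminormedAddCommGroup E] [NormedSpace ℝ E]

/-- Accretivity of a linear operator, in the norm form that makes sense without an inner product:
the resolvents `(1 + s A)⁻¹`, `0 ≤ s`, are contractions wherever they exist. -/
def IsAccretive (A : E →ₗ[ℝ] E) : Prop :=
  ∀ ⦃s : ℝ⦄, 0 ≤ s → ∀ x, ‖x‖ ≤ ‖x + s • A x‖

theorem IsBackwardEuler.antitone_norm_residual {A : E →ₗ[ℝ] E} {f : E} {Δt : ℝ} {v : ℕ → E}
    (hv : IsBackwardEuler A f Δt v) (hA : IsAccretive A) (hΔt : 0 < Δt) :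
    Antitone fun k => ‖f - A (v k)‖ :=
  antitone_nat_of_succ_le fun k =>
    (hA hΔt.le _).trans_eq (congrArg norm (hv.residual_succ_add hΔt.ne' k))

theorem norm_le_norm_add_of_inner_nonneg {H : Type*} [SeminormedAddCommGroup H]
    [InnerProductSpace ℝ H] {x y : H} (h : 0 ≤ inner ℝ x y) : ‖x‖ ≤ ‖x + y‖ := by
  refine le_of_sq_le_sq ?_ (norm_nonneg _)
  rw [norm_add_sq_real]
  linarith [sq_nonneg ‖y‖]

theorem isAccretive_of_inner_nonneg {H : Type*} [SeminormedAddCommGroup H] [InnerProductSpace ℝ H]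
    {A : H →ₗ[ℝ] H} (hA : ∀ x, 0 ≤ inner ℝ x (A x)) : IsAccretive A := fun s hs x =>
  norm_le_norm_add_of_inner_nonneg <| by
    rw [real_inner_smul_right]
    exact mul_nonneg hs (hA x)

end Accretive

theorem le_div_one_sub_of_succ_le_mul_add {𝕜 : Type*} [Field 𝕜] [LinearOrder 𝕜]
    [IsStrictOrderedRing 𝕜] {a : ℕ → 𝕜} {γ c : 𝕜} (hγ₀ : 0 ≤ γ) (hγ₁ : γ < 1)
    (ha₀ : a 0 ≤ c / (1 - γ)) (ha : ∀ k, a (k + 1) ≤ γ * a k + c) (k : ℕ) :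
    a k ≤ c / (1 - γ) := by
  have hγ : 1 - γ ≠ 0 := (sub_pos.2 hγ₁).ne'
  induction k with
  | zero => exact ha₀
  | succ k ih =>
    calc
      a (k + 1) ≤ γ * a k + c := ha k
      _ ≤ γ * (c / (1 - γ)) + c := by gcongr
      _ = c / (1 - γ) := by field_simp; ring

section ErrorBound

variable {E : Type*} [SeminormedAddCommGroup E] [NormedSpace ℝ E] {A B M : E →L[ℝ] E} {f : E}
  {τ Δt : ℝ} {u v : ℕ → E}

theorem IsRSS.norm_error_succ_le (hu : IsRSS (A : E →ₗ[ℝ] E) B f τ Δt u)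
    (hv : IsBackwardEuler (A : E →ₗ[ℝ] E) f Δt v)
    (hA : IsAccretive (A : E →ₗ[ℝ] E)) (hB : IsAccretive (B : E →ₗ[ℝ] E))
    (hτ : 0 ≤ τ) (hΔt : 0 < Δt)
    (hM : (1 + (τ * Δt) • B) * M = 1 + (τ * Δt) • B - Δt • A) (k : ℕ) :
    ‖u (k + 1) - v (k + 1)‖ ≤
      ‖M‖ * ‖u k - v k‖ + Δt ^ 2 * ‖τ • B - A‖ * ‖f - A (v 0)‖ := by
  have hdefect : ‖u (k + 1) - v (k + 1) - M (u k - v k)‖ ≤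
      Δt ^ 2 * ‖τ • B - A‖ * ‖f - A (v 0)‖ :=
    calc
      _ ≤ ‖(1 + (τ * Δt) • B) (u (k + 1) - v (k + 1) - M (u k - v k))‖ :=
        hB (mul_nonneg hτ hΔt.le) _
      _ = ‖Δt ^ 2 • (τ • B - A) (f - A (v (k + 1)))‖ :=
        (congrArg norm (hu.preconditioner_error hv hΔt.ne' (M := (M : E →ₗ[ℝ] E))
          (congrArg ContinuousLinearMap.toLinearMap hM) k)).trans (norm_neg _)
      _ = Δt ^ 2 * ‖(τ • B - A) (f - A (v (k + 1)))‖ := by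
        rw [norm_smul, Real.norm_of_nonneg (sq_nonneg Δt)]
      _ ≤ Δt ^ 2 * (‖τ • B - A‖ * ‖f - A (v 0)‖) := by
        gcongr
        exact (τ • B - A).le_opNorm_of_le (hv.antitone_norm_residual hA hΔt (k + 1).zero_le)
      _ = _ := (mul_assoc _ _ _).symm
  calc
    _ ≤ ‖M (u k - v k)‖ + ‖u (k + 1) - v (k + 1) - M (u k - v k)‖ := norm_le_insert' _ _
    _ ≤ _ := add_le_add (M.le_opNorm _) hdefect

/-- The equation `hM` says `M = 1 - Δt • (1 + τ Δt B)⁻¹ A` without presupposing that the inverse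
exists. -/
theorem rss_vs_backward_euler_general (hu : IsRSS (A : E →ₗ[ℝ] E) B f τ Δt u)
    (hv : IsBackwardEuler (A : E →ₗ[ℝ] E) f Δt v) (h0 : u 0 = v 0)
    (hA : IsAccretive (A : E →ₗ[ℝ] E)) (hB : IsAccretive (B : E →ₗ[ℝ] E))
    (hτ : 0 ≤ τ) (hΔt : 0 < Δt)
    (hM : (1 + (τ * Δt) • B) * M = 1 + (τ * Δt) • B - Δt • A) (hM₁ : ‖M‖ < 1) (k : ℕ) :
    ‖u k - v k‖ ≤ Δt ^ 2 * ‖τ • B - A‖ * (1 / (1 - ‖M‖)) * ‖f - A (v 0)‖ := by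
  have hinit : ‖u 0 - v 0‖ ≤ Δt ^ 2 * ‖τ • B - A‖ * ‖f - A (v 0)‖ / (1 - ‖M‖) := by
    have := sub_pos.2 hM₁
    rw [h0, sub_self, norm_zero]
    positivity
  have hbound := le_div_one_sub_of_succ_le_mul_add (a := fun k => ‖u k - v k‖) (norm_nonneg M) hM₁
    hinit (hu.norm_error_succ_le hv hA hB hτ hΔt hM) k
  rwa [mul_one_div, div_mul_eq_mul_div]

end ErrorBound

section EuclideanMatrix

theorem vnorm_eq_norm_toLp {N : ℕ} (w : Fin N → ℝ) : vnorm w = ‖WithLp.toLp 2 w‖ := by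
  rw [EuclideanSpace.norm_eq, vnorm]
  simp only [dotProduct, Real.norm_eq_abs, sq_abs, ← pow_two]

theorem mopNorm_eq_norm_toEuclideanCLM {N : ℕ} (C : Matrix (Fin N) (Fin N) ℝ) :
    mopNorm C = ‖toEuclideanCLM (𝕜 := ℝ) C‖ :=
  rfl

variable {n : Type*} [Fintype n] [DecidableEq n]

section Schemes

variable {𝕜 : Type*} [RCLike 𝕜] {A B : Matrix n n 𝕜} {f : n → 𝕜} {τ Δt : 𝕜} {u v : ℕ → n → 𝕜}

theorem IsRSS.toLp (hu : IsRSS A.mulVecLin B.mulVecLin f τ Δt u) :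
    IsRSS (toEuclideanCLM (𝕜 := 𝕜) A : EuclideanSpace 𝕜 n →ₗ[𝕜] EuclideanSpace 𝕜 n)
      (toEuclideanCLM (𝕜 := 𝕜) B) (WithLp.toLp 2 f) τ Δt fun k => WithLp.toLp 2 (u k) :=
  fun k => congrArg (WithLp.toLp 2) (hu k)

theorem IsBackwardEuler.toLp (hv : IsBackwardEuler A.mulVecLin f Δt v) :
    IsBackwardEuler (toEuclideanCLM (𝕜 := 𝕜) A : EuclideanSpace 𝕜 n →ₗ[𝕜] EuclideanSpace 𝕜 n)
      (WithLp.toLp 2 f) Δt fun k => WithLp.toLp 2 (v k) :=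
  fun k => congrArg (WithLp.toLp 2) (hv k)

end Schemes

theorem isAccretive_toEuclideanCLM {A : Matrix n n ℝ} (hA : A.PosSemidef) :
    IsAccretive (toEuclideanCLM (𝕜 := ℝ) A : EuclideanSpace ℝ n →ₗ[ℝ] EuclideanSpace ℝ n) :=
  isAccretive_of_inner_nonneg (isPositive_toEuclideanLin_iff.2 hA).re_inner_nonneg_right

theorem mul_one_sub_smul_inv_mul {R : Type*} [CommRing R] {P : Matrix n n R} (hP : IsUnit P)
    (A : Matrix n n R) (t : R) : P * (1 - t • (P⁻¹ * A)) = P - t • A := by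
  rw [mul_sub, mul_one, mul_smul_comm,
    mul_nonsing_inv_cancel_left _ _ (P.isUnit_iff_isUnit_det.1 hP)]

theorem preconditioner_mul_toEuclideanCLM (A : Matrix n n ℝ) {B : Matrix n n ℝ}
    (hB : B.PosSemidef) {s : ℝ} (hs : 0 ≤ s) (t : ℝ) :
    (1 + s • toEuclideanCLM (𝕜 := ℝ) B) *
        toEuclideanCLM (𝕜 := ℝ) (1 - t • ((1 + s • B)⁻¹ * A)) =
      1 + s • toEuclideanCLM (𝕜 := ℝ) B - t • toEuclideanCLM (𝕜 := ℝ) A := by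
  have hP : (1 + s • B).PosDef := PosDef.one.add_posSemidef (hB.smul hs)
  have := congrArg (toEuclideanCLM (𝕜 := ℝ)) (mul_one_sub_smul_inv_mul hP.isUnit A t)
  simpa only [map_mul, map_sub, map_add, map_one, map_smul] using this

end EuclideanMatrix

/-- comparison of the RSS sequence with the backward Euler
sequence: if `M = I − Δt (I + τΔt B)⁻¹ A` satisfies `‖M‖ < 1`, then there
is `γ ∈ [0,1)` with
`‖u⁽ᵏ⁾ − v⁽ᵏ⁾‖ ≤ Δt² ‖τB − A‖ (1/(1−γ)) ‖f − A v⁽⁰⁾‖` for all `k`. -/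
theorem rss_vs_backward_euler
    {N : ℕ} (hN : 0 < N) (A B : Matrix (Fin N) (Fin N) ℝ)
    (hA : A.PosDef) (hB : B.PosDef)
    (f : Fin N → ℝ) (τ Δt : ℝ) (hτ : 0 < τ) (hΔt : 0 < Δt)
    (u v : ℕ → Fin N → ℝ)
    (hu : ∀ k, (1 / Δt) • (u (k + 1) - u k) + τ • B.mulVec (u (k + 1) - u k)
        = f - A.mulVec (u k))
    (hv : ∀ k, (1 / Δt) • (v (k + 1) - v k) + A.mulVec (v (k + 1)) = f)
    (h0 : u 0 = v 0)
    (hM : mopNorm (1 - Δt • (((1 : Matrix (Fin N) (Fin N) ℝ) + (τ * Δt) • B)⁻¹ * A)) < 1) :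
    ∃ γ : ℝ, 0 ≤ γ ∧ γ < 1 ∧
      ∀ k : ℕ, vnorm (u k - v k) ≤
        Δt ^ 2 * mopNorm (τ • B - A) * (1 / (1 - γ)) * vnorm (f - A.mulVec (v 0)) := by
  refine ⟨_, norm_nonneg _, hM, fun k => ?_⟩
  rw [mopNorm_eq_norm_toEuclideanCLM (τ • B - A), map_sub, map_smul, vnorm_eq_norm_toLp,
    vnorm_eq_norm_toLp]
  exact rss_vs_backward_euler_general (IsRSS.toLp (A := A) (B := B) hu)
    (IsBackwardEuler.toLp (A := A) hv) (congrArg (WithLp.toLp 2) h0)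
    (isAccretive_toEuclideanCLM hA.posSemidef) (isAccretive_toEuclideanCLM hB.posSemidef) hτ.le hΔt
    (preconditioner_mul_toEuclideanCLM A hB.posSemidef (mul_pos hτ hΔt).le Δt) hM k
end

section
/- Let Δt > 0, β̃ ≥ 0 and m a real number with m ≠ 0, and set g = 1 − m²Δt/(1 + β̃Δt), the amplification factor of the stabilized Fourier scheme û^(k+1) = g·û^(k). Then |g| < 1 if and only if (m² − 2β̃)·Δt < 2. In particular, if β̃ ≥ m²/2 then |g| < 1 for every Δt > 0. -/
lemma abs_sub_lt_abs_iff_lt_two_mul {R : Type*} [CommRing R] [LinearOrder R]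
    [IsStrictOrderedRing R] {a d : R} (ha : 0 < a) : |d - a| < |d| ↔ a < 2 * d := by
  calc |d - a| < |d|
    _ ↔ (d - a) ^ 2 < d ^ 2 := sq_lt_sq.symm
    _ ↔ a * a < a * (2 * d) := by constructor <;> intro h <;> linarith
    _ ↔ a < 2 * d := mul_lt_mul_iff_right₀ ha

lemma abs_one_sub_div_lt_one_iff {K : Type*} [Field K] [LinearOrder K]
    [IsStrictOrderedRing K] {a d : K} (ha : 0 < a) (hd : d ≠ 0) :
    |1 - a / d| < 1 ↔ a < 2 * d := by
  rw [one_sub_div hd, abs_div, div_lt_one (abs_pos.2 hd), abs_sub_lt_abs_iff_lt_two_mul ha]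

/-- The amplification factor of one RSS step of size `t` with stabilization parameter `β`, on a
mode where the discretized operator has eigenvalue `μ`; the heat equation has `μ = m ^ 2`. -/
def rssAmplification {K : Type*} [Field K] (μ β t : K) : K :=
  1 - μ * t / (1 + β * t)

section Amplification

variable {K : Type*} [Field K] [LinearOrder K] [IsStrictOrderedRing K]
  {μ β t : K}

lemma abs_rssAmplification_lt_one_iff (hμ : 0 < μ) (ht : 0 < t) (hd : 1 + β * t ≠ 0) :
    |rssAmplification μ β t| < 1 ↔ (μ - 2 * β) * t < 2 := by
  calc |rssAmplification μ β t| < 1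
    _ ↔ μ * t < 2 * (1 + β * t) := abs_one_sub_div_lt_one_iff (mul_pos hμ ht) hd
    _ ↔ (μ - 2 * β) * t < 2 := by constructor <;> intro h <;> linarith

lemma abs_rssAmplification_lt_one_of_half_le (hμ : 0 < μ) (hβ : μ / 2 ≤ β) (ht : 0 < t) :
    |rssAmplification μ β t| < 1 := by
  have hβ_pos : 0 < β := (half_pos hμ).trans_le hβ
  have hd : 1 + β * t ≠ 0 := by positivity
  have h_nonpos : (μ - 2 * β) * t ≤ 0 :=
    mul_nonpos_of_nonpos_of_nonneg (by linarith) ht.le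
  exact (abs_rssAmplification_lt_one_iff hμ ht hd).2 (h_nonpos.trans_lt two_pos)

theorem fourier_mode_stability_general (hμ : 0 < μ) (ht : 0 < t) (hd : 1 + β * t ≠ 0) :
    (|rssAmplification μ β t| < 1 ↔ (μ - 2 * β) * t < 2) ∧
      (β ≥ μ / 2 → ∀ t' : K, 0 < t' → |rssAmplification μ β t'| < 1) :=
  ⟨abs_rssAmplification_lt_one_iff hμ ht hd,
    fun hβ _ ht' => abs_rssAmplification_lt_one_of_half_le hμ hβ ht'⟩

end Amplification

/-- for the stabilized Fourier scheme with amplification factor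
`g = 1 − m²Δt/(1 + β̃Δt)` (with `Δt > 0`, `β̃ ≥ 0`, `m ≠ 0`), one has
`|g| < 1 ↔ (m² − 2β̃)Δt < 2`; in particular, if `β̃ ≥ m²/2` then `|g| < 1`
for every time step `Δt > 0`. -/
theorem fourier_mode_stability
    (Δt β' m : ℝ) (hΔt : 0 < Δt) (hβ' : 0 ≤ β') (hm : m ≠ 0) :
    (|1 - m ^ 2 * Δt / (1 + β' * Δt)| < 1 ↔ (m ^ 2 - 2 * β') * Δt < 2) ∧
      (β' ≥ m ^ 2 / 2 →
        ∀ Δt' : ℝ, 0 < Δt' → |1 - m ^ 2 * Δt' / (1 + β' * Δt')| < 1) := by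
  exact fourier_mode_stability_general (by positivity) hΔt (by positivity)
end

section
/- Let u, u' ∈ ℝ^N satisfy the nonlinear RSS step (u' − u)/Δt + τ B(u' − u) + (1/ε²) f(u) = −A u for some Δt > 0. Then (1/Δt − L/(2ε²))·‖u' − u‖² + (τ/β − 1/2)·⟨A(u' − u), u' − u⟩ + E(u') − E(u) ≤ 0. -/
open Matrix

/-! The derivative of `F - L/2 x²` is `f - L x`, which is antitone when `f' ≤ L`; so `F - L/2 x²` is
concave and lies below its tangents. Summed over coordinates, this bounds the change of the
nonlinear part of the energy by its first variation plus `L/(2ε²) ‖u' - u‖²`, whereas the quadratic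
part changes by exactly `⟨Au, u' - u⟩ + ½⟨A(u' - u), u' - u⟩`. Pairing the scheme with `u' - u`
shows that the total first variation is `-‖u' - u‖²/Δt - τ⟨B(u' - u), u' - u⟩`, and comparing `B`
with `A` bounds its last term by `-(τ/β)⟨A(u' - u), u' - u⟩`. -/

theorem le_tangent_of_concaveOn {S : Set ℝ} {g : ℝ → ℝ} {g' x y : ℝ} (hg : ConcaveOn ℝ S g)
    (hx : x ∈ S) (hy : y ∈ S) (hg' : HasDerivAt g g' x) : g y ≤ g x + g' * (y - x) := by
  rcases lt_trichotomy x y with hxy | rfl | hyx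
  · have hslope := hg.slope_le_of_hasDerivAt hx hy hxy hg'
    rw [slope_def_field, div_le_iff₀ (sub_pos.2 hxy)] at hslope
    linarith
  · simp
  · have hslope := hg.le_slope_of_hasDerivAt hy hx hyx hg'
    rw [slope_def_field, le_div_iff₀ (sub_pos.2 hyx)] at hslope
    linarith

section OneSidedLipschitz

variable {f F : ℝ → ℝ} {L : ℝ}

theorem antitone_sub_mul_of_deriv_le (hf : Differentiable ℝ f) (hfL : ∀ x, deriv f x ≤ L) :
    Antitone fun x => f x - L * x := by
  have hderiv (x : ℝ) : HasDerivAt (fun x => f x - L * x) (deriv f x - L) x :=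
    ((hf x).hasDerivAt.sub ((hasDerivAt_id x).const_mul L)).congr_deriv (by rw [mul_one])
  refine antitone_of_deriv_nonpos (fun x => (hderiv x).differentiableAt) fun x => ?_
  rw [(hderiv x).deriv]
  exact sub_nonpos.2 (hfL x)

theorem le_tangent_add_sq (hF : ∀ x, HasDerivAt F (f x) x)
    (hf : Antitone fun x => f x - L * x) (x y : ℝ) :
    F y ≤ F x + f x * (y - x) + L / 2 * (y - x) ^ 2 := by
  have hderiv (x : ℝ) : HasDerivAt (fun x => F x - L / 2 * x ^ 2) (f x - L * x) x :=
    ((hF x).sub ((hasDerivAt_pow 2 x).const_mul (L / 2))).congr_deriv (by push_cast; ring)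
  have hconcave : ConcaveOn ℝ Set.univ fun x => F x - L / 2 * x ^ 2 := by
    refine Antitone.concaveOn_univ_of_deriv (fun x => (hderiv x).differentiableAt) ?_
    rwa [funext fun x => (hderiv x).deriv]
  have htangent :=
    le_tangent_of_concaveOn hconcave (Set.mem_univ x) (Set.mem_univ y) (hderiv x)
  linear_combination htangent

theorem sum_le_tangent_add_sq {ι : Type*} [Fintype ι] (hF : ∀ x, HasDerivAt F (f x) x)
    (hf : Antitone fun x => f x - L * x) (u v : ι → ℝ) :
    ∑ i, F (v i) ≤
      ∑ i, F (u i) + (fun i => f (u i)) ⬝ᵥ (v - u) + L / 2 * ((v - u) ⬝ᵥ (v - u)) := by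
  simp only [dotProduct, Finset.mul_sum, ← Finset.sum_add_distrib, ← sq]
  exact Finset.sum_le_sum fun i _ => le_tangent_add_sq hF hf (u i) (v i)

end OneSidedLipschitz

section QuadraticForm

variable {ι R : Type*} [Fintype ι]

theorem mulVec_dotProduct_comm_of_isSymm [CommSemiring R] {A : Matrix ι ι R} (hA : A.IsSymm)
    (u v : ι → R) : A *ᵥ u ⬝ᵥ v = A *ᵥ v ⬝ᵥ u := by
  rw [dotProduct_comm, dotProduct_mulVec, ← mulVec_transpose, hA.eq]

theorem mulVec_dotProduct_self_eq_add [CommRing R] {A : Matrix ι ι R} (hA : A.IsSymm)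
    (u v : ι → R) :
    A *ᵥ v ⬝ᵥ v = A *ᵥ u ⬝ᵥ u + 2 * (A *ᵥ u ⬝ᵥ (v - u)) + A *ᵥ (v - u) ⬝ᵥ (v - u) := by
  have hsymm := mulVec_dotProduct_comm_of_isSymm hA u v
  simp only [mulVec_sub, sub_dotProduct, dotProduct_sub]
  linear_combination -hsymm

end QuadraticForm

section Energy

/-- The energy `E(u) = ½⟨Au, u⟩ + κ ∑ F(uᵢ)` which the scheme dissipates; the paper's coefficient
`1/ε²` is the weight `κ`. -/
noncomputable def rssEnergy {ι : Type*} [Fintype ι] (A : Matrix ι ι ℝ) (F : ℝ → ℝ) (κ : ℝ)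
    (u : ι → ℝ) : ℝ :=
  1 / 2 * (A *ᵥ u ⬝ᵥ u) + κ * ∑ i, F (u i)

variable {ι : Type*} [Fintype ι] {A B : Matrix ι ι ℝ} {f F : ℝ → ℝ} {κ σ τ β L : ℝ}
  {u u' : ι → ℝ}

theorem rssEnergy_sub_le (hA : A.IsSymm) (hκ : 0 ≤ κ) (hF : ∀ x, HasDerivAt F (f x) x)
    (hf : Antitone fun x => f x - L * x) (u u' : ι → ℝ) :
    rssEnergy A F κ u' - rssEnergy A F κ u ≤
      (A *ᵥ u + κ • fun i => f (u i)) ⬝ᵥ (u' - u) + 1 / 2 * (A *ᵥ (u' - u) ⬝ᵥ (u' - u))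
        + κ * (L / 2 * ((u' - u) ⬝ᵥ (u' - u))) := by
  have hquadratic := mulVec_dotProduct_self_eq_add hA u u'
  have hnonlinear := mul_le_mul_of_nonneg_left (sum_le_tangent_add_sq hF hf u u') hκ
  simp only [rssEnergy, add_dotProduct, smul_dotProduct, smul_eq_mul]
  linear_combination 1 / 2 * hquadratic + hnonlinear

theorem first_variation_eq_of_rss_step {R : Type*} [CommRing R] {A B : Matrix ι ι R} {f : R → R}
    {σ τ κ : R} {u u' : ι → R}
    (hstep : σ • (u' - u) + τ • B *ᵥ (u' - u) + κ • (fun i => f (u i)) = -(A *ᵥ u)) :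
    (A *ᵥ u + κ • fun i => f (u i)) ⬝ᵥ (u' - u) =
      -(σ * ((u' - u) ⬝ᵥ (u' - u))) - τ * (B *ᵥ (u' - u) ⬝ᵥ (u' - u)) := by
  have hpair := congrArg (· ⬝ᵥ (u' - u)) hstep
  simp only [add_dotProduct, smul_dotProduct, neg_dotProduct, smul_eq_mul] at hpair ⊢
  linear_combination hpair

/-- The coefficients `σ` and `κ` stand for `1/Δt` and `1/ε²`. -/
theorem nonlinear_rss_energy_inequality_general (hA : A.IsSymm) (hβ : 0 < β)
    (hAB : ∀ v : ι → ℝ, A *ᵥ v ⬝ᵥ v ≤ β * (B *ᵥ v ⬝ᵥ v)) (hτ : 0 ≤ τ) (hκ : 0 ≤ κ)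
    (hF : ∀ x, HasDerivAt F (f x) x) (hf : Antitone fun x => f x - L * x)
    (hstep : σ • (u' - u) + τ • B *ᵥ (u' - u) + κ • (fun i => f (u i)) = -(A *ᵥ u)) :
    (σ - κ * (L / 2)) * ((u' - u) ⬝ᵥ (u' - u))
      + (τ / β - 1 / 2) * (A *ᵥ (u' - u) ⬝ᵥ (u' - u))
      + rssEnergy A F κ u' - rssEnergy A F κ u ≤ 0 := by
  have henergy := rssEnergy_sub_le hA hκ hF hf u u'
  rw [first_variation_eq_of_rss_step hstep] at henergy
  have hstabilization :
      τ / β * (A *ᵥ (u' - u) ⬝ᵥ (u' - u)) ≤ τ * (B *ᵥ (u' - u) ⬝ᵥ (u' - u)) := calc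
    _ ≤ τ / β * (β * (B *ᵥ (u' - u) ⬝ᵥ (u' - u))) := by gcongr; exact hAB _
    _ = τ * (B *ᵥ (u' - u) ⬝ᵥ (u' - u)) := by field_simp
  linear_combination henergy + hstabilization

end Energy

/-- the fundamental energy inequality for one nonlinear RSS step
`(u' − u)/Δt + τ B (u' − u) + (1/ε²) f(u) = −A u`:
`(1/Δt − L/(2ε²))‖u' − u‖² + (τ/β − 1/2)⟨A(u'−u), u'−u⟩ + E(u') − E(u) ≤ 0`,
where `E(u) = (1/2)⟨Au,u⟩ + (1/ε²) Σᵢ F(uᵢ)`. -/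
theorem nonlinear_rss_energy_inequality
    {N : ℕ} (hN : 0 < N) (A B : Matrix (Fin N) (Fin N) ℝ)
    (hA : A.PosDef) (hB : B.PosDef)
    (α β : ℝ) (hα : 0 < α) (hαβ : α ≤ β)
    (hlow : ∀ u : Fin N → ℝ, α * (B.mulVec u ⬝ᵥ u) ≤ A.mulVec u ⬝ᵥ u)
    (hup : ∀ u : Fin N → ℝ, A.mulVec u ⬝ᵥ u ≤ β * (B.mulVec u ⬝ᵥ u))
    (ε L τ : ℝ) (hε : 0 < ε) (hL : 0 ≤ L) (hτ : 0 < τ)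
    (f F : ℝ → ℝ)
    (hf : ∀ x, DifferentiableAt ℝ f x) (hfL : ∀ x, |deriv f x| ≤ L)
    (hF : ∀ x, HasDerivAt F (f x) x) (hF0 : F 0 = 0)
    (Δt : ℝ) (hΔt : 0 < Δt)
    (u u' : Fin N → ℝ)
    (hstep : (1 / Δt) • (u' - u) + τ • B.mulVec (u' - u)
        + (1 / ε ^ 2) • (fun i => f (u i)) = -(A.mulVec u)) :
    (1 / Δt - L / (2 * ε ^ 2)) * ((u' - u) ⬝ᵥ (u' - u))
      + (τ / β - 1 / 2) * (A.mulVec (u' - u) ⬝ᵥ (u' - u))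
      + ((1 / 2) * (A.mulVec u' ⬝ᵥ u') + (1 / ε ^ 2) * ∑ i, F (u' i))
      - ((1 / 2) * (A.mulVec u ⬝ᵥ u) + (1 / ε ^ 2) * ∑ i, F (u i)) ≤ 0 := by
  have hcoeff : L / (2 * ε ^ 2) = 1 / ε ^ 2 * (L / 2) := by ring
  rw [hcoeff]
  exact nonlinear_rss_energy_inequality_general (isHermitian_iff_isSymm.1 hA.isHermitian)
    (hα.trans_le hαβ) hup hτ.le (by positivity) hF
    (antitone_sub_mul_of_deriv_le hf fun x => (le_abs_self _).trans (hfL x)) hstep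
end

section
/- Suppose τ ≥ β/2 and (τ/β − 1/2)·λ_min − L/(2ε²) < 0, where λ_min is the smallest eigenvalue of A. Then for every Δt with 0 < Δt < 1/(L/(2ε²) − (τ/β − 1/2)·λ_min), any u, u' ∈ ℝ^N satisfying the nonlinear RSS step (u' − u)/Δt + τ B(u' − u) + (1/ε²) f(u) = −A u obey E(u') ≤ E(u). -/
open Matrix

/-!
Write `d = u' - u` and `γ = 1 / ε ^ 2`. The energy is quadratic up to the term `γ * ∑ F (uᵢ)`, and
`f` is one-sided Lipschitz with constant `L`, so
`E(u') - E(u) ≤ ⟨Au + γ f(u), d⟩ + (1/2) ⟨Ad, d⟩ + (γ L / 2) ‖d‖²`.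
Testing the scheme against `d` turns the first term into `-(1/Δt) ‖d‖² - τ ⟨Bd, d⟩`. Since
`⟨Bd, d⟩ ≥ ⟨Ad, d⟩ / β`, the preconditioner absorbs `(1/2) ⟨Ad, d⟩` and still leaves
`(τ/β - 1/2) ⟨Ad, d⟩ ≥ (τ/β - 1/2) λ_min ‖d‖²`; the bound on `Δt` makes the resulting
coefficient of `‖d‖²` nonpositive.
-/

section DescentLemma

lemma add_mul_sub_le_of_convexOn_of_hasDerivAt {S : Set ℝ} {g : ℝ → ℝ} {g' x y : ℝ}
    (hg : ConvexOn ℝ S g) (hx : x ∈ S) (hy : y ∈ S) (hg' : HasDerivAt g g' x) :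
    g x + g' * (y - x) ≤ g y := by
  rcases lt_trichotomy x y with hxy | rfl | hyx
  · have hslope := hg.le_slope_of_hasDerivAt hx hy hxy hg'
    rw [slope_def_field, le_div_iff₀ (sub_pos.2 hxy)] at hslope
    linarith
  · simp
  · have hslope := hg.slope_le_of_hasDerivAt hy hx hyx hg'
    rw [slope_def_field, div_le_iff₀ (sub_pos.2 hyx)] at hslope
    linarith

/-- One-sided Lipschitz condition with constant `L`, the form in which the bound on `f'` enters the
descent lemma. It bounds the increase of `f` only, so `L` may be negative. -/
def OneSidedLipschitz (L : ℝ) (f : ℝ → ℝ) : Prop :=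
  ∀ ⦃x y : ℝ⦄, x ≤ y → f y - f x ≤ L * (y - x)

variable {L : ℝ} {f F : ℝ → ℝ}

lemma oneSidedLipschitz_of_deriv_le (hf : Differentiable ℝ f) (hfL : ∀ x, deriv f x ≤ L) :
    OneSidedLipschitz L f :=
  image_sub_le_mul_sub_of_deriv_le hf hfL

lemma hasDerivAt_half_mul_sq_sub {F' x : ℝ} (hF : HasDerivAt F F' x) :
    HasDerivAt (fun y ↦ L / 2 * y ^ 2 - F y) (L * x - F') x :=
  (((hasDerivAt_pow 2 x).const_mul (L / 2)).sub hF).congr_deriv (by push_cast; ring)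

lemma OneSidedLipschitz.convexOn_half_mul_sq_sub (hf : OneSidedLipschitz L f)
    (hF : ∀ x, HasDerivAt F (f x) x) :
    ConvexOn ℝ Set.univ fun x ↦ L / 2 * x ^ 2 - F x := by
  have hderiv (x : ℝ) := hasDerivAt_half_mul_sq_sub (L := L) (hF x)
  refine Monotone.convexOn_univ_of_deriv (fun x ↦ (hderiv x).differentiableAt) fun x y hxy ↦ ?_
  rw [(hderiv x).deriv, (hderiv y).deriv]
  linarith [hf hxy]

lemma OneSidedLipschitz.le_add_mul_sub_add_half_mul_sq (hf : OneSidedLipschitz L f)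
    (hF : ∀ x, HasDerivAt F (f x) x) (x y : ℝ) :
    F y ≤ F x + f x * (y - x) + L / 2 * (y - x) ^ 2 := by
  have htangent := add_mul_sub_le_of_convexOn_of_hasDerivAt (hf.convexOn_half_mul_sq_sub hF)
    (Set.mem_univ x) (Set.mem_univ y) (hasDerivAt_half_mul_sq_sub (hF x))
  linarith

end DescentLemma

section QuadraticForms

variable {ι : Type*} [Fintype ι]

open scoped MatrixOrder in
lemma algebraMap_iInf_eigenvalues_le {𝕜 : Type*} [RCLike 𝕜] [DecidableEq ι] {A : Matrix ι ι 𝕜}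
    (hA : A.IsHermitian) : algebraMap ℝ (Matrix ι ι 𝕜) (⨅ i, hA.eigenvalues i) ≤ A := by
  refine algebraMap_le_of_le_spectrum (fun x hx ↦ ?_) hA.isSelfAdjoint
  rw [hA.spectrum_real_eq_range_eigenvalues] at hx
  obtain ⟨i, rfl⟩ := hx
  exact ciInf_le (Set.finite_range _).bddBelow i

lemma iInf_eigenvalues_mul_dotProduct_le [DecidableEq ι] {A : Matrix ι ι ℝ}
    (hA : A.IsHermitian) (v : ι → ℝ) :
    (⨅ i, hA.eigenvalues i) * (v ⬝ᵥ v) ≤ A *ᵥ v ⬝ᵥ v := by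
  have hnonneg := (Matrix.le_iff.1 (algebraMap_iInf_eigenvalues_le hA)).dotProduct_mulVec_nonneg v
  rw [Algebra.algebraMap_eq_smul_one, sub_mulVec, smul_mulVec, one_mulVec, dotProduct_sub,
    dotProduct_smul, smul_eq_mul, star_trivial, sub_nonneg] at hnonneg
  rwa [dotProduct_comm (A *ᵥ v)]

lemma mulVec_add_dotProduct_add {R : Type*} [CommSemiring R] {A : Matrix ι ι R} (hA : A.IsSymm)
    (u v : ι → R) :
    A *ᵥ (u + v) ⬝ᵥ (u + v) = A *ᵥ u ⬝ᵥ u + 2 * (A *ᵥ u ⬝ᵥ v) + A *ᵥ v ⬝ᵥ v := by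
  have hsymm : A *ᵥ v ⬝ᵥ u = A *ᵥ u ⬝ᵥ v := by
    rw [dotProduct_comm, dotProduct_mulVec, ← mulVec_transpose, hA.eq]
  rw [mulVec_add, add_dotProduct, dotProduct_add, dotProduct_add, hsymm]
  ring

lemma iInf_eigenvalues_add_half_le_of_le_mul [DecidableEq ι] {A B : Matrix ι ι ℝ}
    (hA : A.IsHermitian) {β τ : ℝ} (hβ : 0 < β) (hτ : β / 2 ≤ τ) {v : ι → ℝ}
    (hAB : A *ᵥ v ⬝ᵥ v ≤ β * (B *ᵥ v ⬝ᵥ v)) :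
    (τ / β - 1 / 2) * (⨅ i, hA.eigenvalues i) * (v ⬝ᵥ v) + 1 / 2 * (A *ᵥ v ⬝ᵥ v) ≤
      τ * (B *ᵥ v ⬝ᵥ v) := by
  have hcoeff : 0 ≤ τ / β - 1 / 2 := by
    rw [sub_nonneg, le_div_iff₀ hβ]
    linarith
  have hτβ : 0 ≤ τ / β := by linarith
  calc (τ / β - 1 / 2) * (⨅ i, hA.eigenvalues i) * (v ⬝ᵥ v) + 1 / 2 * (A *ᵥ v ⬝ᵥ v)
      ≤ (τ / β - 1 / 2) * (A *ᵥ v ⬝ᵥ v) + 1 / 2 * (A *ᵥ v ⬝ᵥ v) := by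
        rw [mul_assoc]
        gcongr
        exact iInf_eigenvalues_mul_dotProduct_le hA v
    _ = τ / β * (A *ᵥ v ⬝ᵥ v) := by ring
    _ ≤ τ / β * (β * (B *ᵥ v ⬝ᵥ v)) := by gcongr
    _ = τ * (B *ᵥ v ⬝ᵥ v) := by field_simp

end QuadraticForms

section RSS

variable {ι : Type*} [Fintype ι]

/-- The energy `E(u) = (1/2) ⟨Au, u⟩ + γ ∑ᵢ F(uᵢ)`, with a general weight `γ` in place of the
`1 / ε ^ 2` of the phase-field model. -/
noncomputable def phaseFieldEnergy (A : Matrix ι ι ℝ) (γ : ℝ) (F : ℝ → ℝ) (u : ι → ℝ) : ℝ :=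
  1 / 2 * (A *ᵥ u ⬝ᵥ u) + γ * ∑ i, F (u i)

/-- `u'` is obtained from `u` by one step of size `Δt` of the nonlinear residual smoothing scheme
(RSS) with preconditioner `τ B`, for the gradient flow of the energy with weight `γ`. The time step
enters through `1 / Δt`, so `Δt = 0` means that the time derivative is left out. -/
def IsNonlinearRSSStep (A B : Matrix ι ι ℝ) (τ γ : ℝ) (f : ℝ → ℝ) (Δt : ℝ) (u u' : ι → ℝ) : Prop :=
  (1 / Δt) • (u' - u) + τ • B *ᵥ (u' - u) + γ • (fun i ↦ f (u i)) = -(A *ᵥ u)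

lemma IsNonlinearRSSStep.dotProduct_sub_eq {A B : Matrix ι ι ℝ} {τ γ Δt : ℝ} {f : ℝ → ℝ}
    {u u' : ι → ℝ} (hstep : IsNonlinearRSSStep A B τ γ f Δt u u') :
    A *ᵥ u ⬝ᵥ (u' - u) + γ * ((fun i ↦ f (u i)) ⬝ᵥ (u' - u)) =
      -(1 / Δt * ((u' - u) ⬝ᵥ (u' - u)) + τ * (B *ᵥ (u' - u) ⬝ᵥ (u' - u))) := by
  have htested := congrArg (· ⬝ᵥ (u' - u)) hstep
  simp only [add_dotProduct, smul_dotProduct, neg_dotProduct, smul_eq_mul] at htested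
  linarith

variable {A : Matrix ι ι ℝ} {γ L : ℝ} {f F : ℝ → ℝ}

lemma OneSidedLipschitz.sum_le_sum_add_dotProduct_sub (hf : OneSidedLipschitz L f)
    (hF : ∀ x, HasDerivAt F (f x) x) (u u' : ι → ℝ) :
    ∑ i, F (u' i) ≤
      ∑ i, F (u i) + (fun i ↦ f (u i)) ⬝ᵥ (u' - u) + L / 2 * ((u' - u) ⬝ᵥ (u' - u)) := by
  simp only [dotProduct, Finset.mul_sum, ← Finset.sum_add_distrib, Pi.sub_apply, ← sq]
  exact Finset.sum_le_sum fun i _ ↦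
    hf.le_add_mul_sub_add_half_mul_sq hF (u i) (u' i)

lemma phaseFieldEnergy_le_of_oneSidedLipschitz (hA : A.IsSymm) (hγ : 0 ≤ γ)
    (hf : OneSidedLipschitz L f) (hF : ∀ x, HasDerivAt F (f x) x) (u u' : ι → ℝ) :
    phaseFieldEnergy A γ F u' ≤ phaseFieldEnergy A γ F u
      + (A *ᵥ u ⬝ᵥ (u' - u) + γ * ((fun i ↦ f (u i)) ⬝ᵥ (u' - u)))
      + 1 / 2 * (A *ᵥ (u' - u) ⬝ᵥ (u' - u)) + γ * L / 2 * ((u' - u) ⬝ᵥ (u' - u)) := by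
  have hquadratic := mulVec_add_dotProduct_add hA u (u' - u)
  rw [add_sub_cancel] at hquadratic
  have hpotential := mul_le_mul_of_nonneg_left (hf.sum_le_sum_add_dotProduct_sub hF u u') hγ
  simp only [phaseFieldEnergy, hquadratic]
  linarith

theorem nonlinear_rss_conditional_stability_large_tau_general [DecidableEq ι]
    {B : Matrix ι ι ℝ} (hA : A.IsHermitian) {β τ Δt : ℝ} (hβ : 0 < β)
    (hAB : ∀ v : ι → ℝ, A *ᵥ v ⬝ᵥ v ≤ β * (B *ᵥ v ⬝ᵥ v)) (hτ : β / 2 ≤ τ) (hγ : 0 ≤ γ)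
    (hf : OneSidedLipschitz L f) (hF : ∀ x, HasDerivAt F (f x) x) (hΔt : 0 < Δt)
    (hΔt_le : (γ * L / 2 - (τ / β - 1 / 2) * ⨅ i, hA.eigenvalues i) * Δt ≤ 1)
    {u u' : ι → ℝ} (hstep : IsNonlinearRSSStep A B τ γ f Δt u u') :
    phaseFieldEnergy A γ F u' ≤ phaseFieldEnergy A γ F u := by
  have henergy := phaseFieldEnergy_le_of_oneSidedLipschitz
    (isHermitian_iff_isSymm.1 hA) hγ hf hF u u'
  rw [hstep.dotProduct_sub_eq] at henergy
  have hpreconditioner := iInf_eigenvalues_add_half_le_of_le_mul hA hβ hτ (hAB (u' - u))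
  have hnorm : 0 ≤ (u' - u) ⬝ᵥ (u' - u) := dotProduct_self_star_nonneg (u' - u)
  have htime := mul_le_mul_of_nonneg_right ((le_div_iff₀ hΔt).2 hΔt_le) hnorm
  linarith

end RSS

/-- if `τ ≥ β/2` and `(τ/β − 1/2)·λ_min − L/(2ε²) < 0` (with
`λ_min` the smallest eigenvalue of `A`), then for every time step
`0 < Δt < 1/(L/(2ε²) − (τ/β − 1/2)·λ_min)`, the nonlinear RSS step
`(u' − u)/Δt + τ B (u' − u) + (1/ε²) f(u) = −A u` is energy decreasing:
`E(u') ≤ E(u)`, where `E(u) = (1/2)⟨Au,u⟩ + (1/ε²) Σᵢ F(uᵢ)`. -/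
theorem nonlinear_rss_conditional_stability_large_tau
    {N : ℕ} (hN : 0 < N) (A B : Matrix (Fin N) (Fin N) ℝ)
    (hA : A.PosDef) (hB : B.PosDef)
    (α β : ℝ) (hα : 0 < α) (hαβ : α ≤ β)
    (hlow : ∀ u : Fin N → ℝ, α * (B.mulVec u ⬝ᵥ u) ≤ A.mulVec u ⬝ᵥ u)
    (hup : ∀ u : Fin N → ℝ, A.mulVec u ⬝ᵥ u ≤ β * (B.mulVec u ⬝ᵥ u))
    (ε L τ : ℝ) (hε : 0 < ε) (hL : 0 ≤ L) (hτ : 0 < τ)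
    (f F : ℝ → ℝ)
    (hf : ∀ x, DifferentiableAt ℝ f x) (hfL : ∀ x, |deriv f x| ≤ L)
    (hF : ∀ x, HasDerivAt F (f x) x) (hF0 : F 0 = 0)
    (hτβ : β / 2 ≤ τ)
    (hcond : (τ / β - 1 / 2) * (⨅ i, hA.1.eigenvalues i) - L / (2 * ε ^ 2) < 0) :
    ∀ Δt : ℝ, 0 < Δt →
      Δt < 1 / (L / (2 * ε ^ 2) - (τ / β - 1 / 2) * (⨅ i, hA.1.eigenvalues i)) →
      ∀ u u' : Fin N → ℝ,
        (1 / Δt) • (u' - u) + τ • B.mulVec (u' - u)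
            + (1 / ε ^ 2) • (fun i => f (u i)) = -(A.mulVec u) →
        (1 / 2) * (A.mulVec u' ⬝ᵥ u') + (1 / ε ^ 2) * ∑ i, F (u' i) ≤
          (1 / 2) * (A.mulVec u ⬝ᵥ u) + (1 / ε ^ 2) * ∑ i, F (u i) := by
  intro Δt hΔt hΔt_lt u u' hstep
  have hΔt_le := ((lt_div_iff₀' (by linarith)).1 hΔt_lt).le
  exact nonlinear_rss_conditional_stability_large_tau_general hA.1 (hα.trans_le hαβ) hup hτβ
    (by positivity) (oneSidedLipschitz_of_deriv_le hf fun x ↦ le_of_abs_le (hfL x)) hF hΔt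
    (by linear_combination hΔt_le) hstep
end

section
/- Assume Δt > 0 satisfies Δt·Φ(λ_min(B)) < 2α and Δt·Φ(λ_max(B)) < 2α. Then every complex eigenvalue μ of M = I − Δt (I + τΔt B)⁻¹ A satisfies |μ| < 1; that is, the RSS scheme is stable. -/
open Matrix

/-!
Pairing `M v = μ v` with `(I + τ Δt B) v` gives `Δt ⟨Av, v⟩ = (1 - μ) k`, where
`k = |v|² + τ Δt ⟨Bv, v⟩`. If `k > 0`, then `|μ| < 1` if and only if
`Δt |⟨Av, v⟩|² < 2 k Re ⟨Av, v⟩`. By (H) the real part of `⟨Av, v⟩` lies between `α b` and `β b`,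
where `b = ⟨Bv, v⟩`, and the imaginary part is at most `δ |v|² / 2`. Hence both `k > 0` and the
stability inequality follow from `Δt Φ(ξ) < 2 α` at the Rayleigh quotient `ξ = b / |v|²`, which lies
between the extreme eigenvalues of `B`; and `Φ` is convex on `(0, ∞)`.
-/

section Scalar

/-- The function `Φ(ξ) = (β² - 2ατ)ξ + δ²/(4ξ)` whose values on the spectrum of `B` limit the time
step of the RSS scheme. -/
noncomputable def rssPhi (α β τ δ ξ : ℝ) : ℝ :=
  (β ^ 2 - 2 * α * τ) * ξ + δ ^ 2 / (4 * ξ)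

theorem convexOn_rssPhi (α β τ δ : ℝ) : ConvexOn ℝ (Set.Ioi 0) (rssPhi α β τ δ) := by
  have hlin : ConvexOn ℝ (Set.Ioi 0) fun ξ : ℝ ↦ (β ^ 2 - 2 * α * τ) * ξ :=
    (LinearMap.mulLeft ℝ (β ^ 2 - 2 * α * τ)).convexOn (convex_Ioi 0)
  have hinv : ConvexOn ℝ (Set.Ioi 0) fun ξ : ℝ ↦ δ ^ 2 / 4 * ξ ^ (-1 : ℤ) :=
    (convexOn_zpow (-1)).smul (by positivity)
  refine (hlin.add hinv).congr fun ξ _ ↦ ?_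
  simp only [Pi.add_apply, rssPhi, _root_.zpow_neg_one]
  ring

variable {α β τ δ Δt q b : ℝ}

theorem mul_rssPhi_lt_of_mem_Icc {l L ξ c : ℝ} (hl : 0 < l) (hξ : ξ ∈ Set.Icc l L) (hΔt : 0 ≤ Δt)
    (hmin : Δt * rssPhi α β τ δ l < c) (hmax : Δt * rssPhi α β τ δ L < c) :
    Δt * rssPhi α β τ δ ξ < c := by
  have hL : 0 < L := hl.trans_le (hξ.1.trans hξ.2)
  have hconv : rssPhi α β τ δ ξ ≤ max (rssPhi α β τ δ l) (rssPhi α β τ δ L) :=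
    (convexOn_rssPhi α β τ δ).le_max_of_mem_Icc hl hL hξ
  calc Δt * rssPhi α β τ δ ξ
      ≤ Δt * max (rssPhi α β τ δ l) (rssPhi α β τ δ L) := by gcongr
    _ = max (Δt * rssPhi α β τ δ l) (Δt * rssPhi α β τ δ L) := mul_max_of_nonneg _ _ hΔt
    _ < c := max_lt hmin hmax

theorem mul_sq_add_sq_lt_of_mul_rssPhi_lt (hq : 0 < q) (hb : 0 < b)
    (h : Δt * rssPhi α β τ δ (b / q) < 2 * α) :
    Δt * ((β * b) ^ 2 + (δ / 2 * q) ^ 2) < 2 * (q + τ * Δt * b) * (α * b) := by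
  have hscaled : Δt * rssPhi α β τ δ (b / q) * (b * q) < 2 * α * (b * q) := by gcongr
  have hPhi : rssPhi α β τ δ (b / q) * (b * q) =
      (β ^ 2 - 2 * α * τ) * b ^ 2 + (δ / 2 * q) ^ 2 := by
    rw [rssPhi]
    field_simp
    ring
  rw [mul_assoc, hPhi] at hscaled
  linarith

theorem add_mul_pos_of_mul_rssPhi_lt (hα : 0 < α) (hΔt : 0 ≤ Δt) (hq : 0 < q) (hb : 0 < b)
    (h : Δt * rssPhi α β τ δ (b / q) < 2 * α) : 0 < q + τ * Δt * b := by
  have hlt : 0 < 2 * (q + τ * Δt * b) * (α * b) :=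
    lt_of_le_of_lt (by positivity) (mul_sq_add_sq_lt_of_mul_rssPhi_lt hq hb h)
  linarith [pos_of_mul_pos_left hlt (by positivity)]

theorem mul_normSq_lt_of_mul_rssPhi_lt {z : ℂ} (hα : 0 < α) (hΔt : 0 ≤ Δt) (hq : 0 < q)
    (hb : 0 < b) (h : Δt * rssPhi α β τ δ (b / q) < 2 * α) (hlow : α * b ≤ z.re)
    (hup : z.re ≤ β * b) (him : |z.im| ≤ δ / 2 * q) :
    Δt * Complex.normSq z < 2 * (q + τ * Δt * b) * z.re := by
  have hk := add_mul_pos_of_mul_rssPhi_lt hα hΔt hq hb h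
  have hre : 0 ≤ z.re := le_trans (by positivity) hlow
  have him_sq : z.im ^ 2 ≤ (δ / 2 * q) ^ 2 := sq_le_sq.2 (him.trans (le_abs_self _))
  calc Δt * Complex.normSq z = Δt * (z.re ^ 2 + z.im ^ 2) := by rw [Complex.normSq_apply]; ring
    _ ≤ Δt * ((β * b) ^ 2 + (δ / 2 * q) ^ 2) := by gcongr
    _ < 2 * (q + τ * Δt * b) * (α * b) := mul_sq_add_sq_lt_of_mul_rssPhi_lt hq hb h
    _ ≤ 2 * (q + τ * Δt * b) * z.re := by gcongr

theorem norm_lt_one_of_mul_eq_one_sub_mul {μ z : ℂ} {t k : ℝ} (ht : 0 < t)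
    (hμ : t * z = (1 - μ) * k) (hz : t * Complex.normSq z < 2 * k * z.re) : ‖μ‖ < 1 := by
  have hμk : μ * k = k - t * z := by rw [hμ]; ring
  have hsq : ‖μ‖ ^ 2 * k ^ 2 = k ^ 2 - t * (2 * k * z.re - t * Complex.normSq z) := by
    calc ‖μ‖ ^ 2 * k ^ 2 = Complex.normSq (μ * k) := by
          rw [map_mul, Complex.normSq_ofReal, Complex.sq_norm, sq k]
      _ = k ^ 2 - t * (2 * k * z.re - t * Complex.normSq z) := by
          rw [hμk]
          simp only [Complex.normSq_apply, Complex.sub_re, Complex.sub_im, Complex.re_ofReal_mul,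
            Complex.im_ofReal_mul, Complex.ofReal_re, Complex.ofReal_im]
          ring
  have hlt : ‖μ‖ ^ 2 * k ^ 2 < 1 * k ^ 2 := by
    rw [hsq, one_mul]
    exact sub_lt_self _ (mul_pos ht (sub_pos.2 hz))
  exact (sq_lt_one_iff₀ (norm_nonneg μ)).1 (lt_of_mul_lt_mul_right hlt (sq_nonneg k))

end Scalar

section Rayleigh

variable {n 𝕜 : Type*} [Fintype n] [RCLike 𝕜]

open scoped MatrixOrder in
theorem mulVec_dotProduct_le_of_le {C D : Matrix n n ℝ} (h : C ≤ D) (u : n → ℝ) :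
    C *ᵥ u ⬝ᵥ u ≤ D *ᵥ u ⬝ᵥ u := by
  have hnonneg := (Matrix.le_iff.1 h).dotProduct_mulVec_nonneg u
  rwa [star_trivial, dotProduct_comm, sub_mulVec, sub_dotProduct, sub_nonneg] at hnonneg

variable [DecidableEq n]

section Loewner

open scoped MatrixOrder Matrix.Norms.L2Operator

theorem algebraMap_iInf_eigenvalues_le_s14 {B : Matrix n n 𝕜} (hB : B.IsHermitian) :
    algebraMap ℝ (Matrix n n 𝕜) (⨅ i, hB.eigenvalues i) ≤ B := by
  rw [algebraMap_le_iff_le_spectrum hB, hB.spectrum_real_eq_range_eigenvalues]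
  rintro _ ⟨i, rfl⟩
  exact ciInf_le (Set.finite_range _).bddBelow i

theorem le_algebraMap_iSup_eigenvalues {B : Matrix n n 𝕜} (hB : B.IsHermitian) :
    B ≤ algebraMap ℝ (Matrix n n 𝕜) (⨆ i, hB.eigenvalues i) := by
  rw [le_algebraMap_iff_spectrum_le hB, hB.spectrum_real_eq_range_eigenvalues]
  rintro _ ⟨i, rfl⟩
  exact le_ciSup (Set.finite_range _).bddAbove i

end Loewner

open scoped ComplexOrder in
theorem iInf_eigenvalues_pos [Nonempty n] {B : Matrix n n 𝕜} (hB : B.PosDef) :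
    0 < ⨅ i, hB.1.eigenvalues i := by
  obtain ⟨i, hi⟩ := exists_eq_ciInf_of_finite (f := hB.1.eigenvalues)
  exact hi ▸ hB.eigenvalues_pos i

variable {B : Matrix n n ℝ}

theorem iInf_eigenvalues_mul_dotProduct_le_s14 (hB : B.IsHermitian) (u : n → ℝ) :
    (⨅ i, hB.eigenvalues i) * (u ⬝ᵥ u) ≤ B *ᵥ u ⬝ᵥ u := by
  simpa [Algebra.algebraMap_eq_smul_one, smul_mulVec] using
    mulVec_dotProduct_le_of_le (algebraMap_iInf_eigenvalues_le_s14 hB) u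

theorem mulVec_dotProduct_le_iSup_eigenvalues_mul (hB : B.IsHermitian) (u : n → ℝ) :
    B *ᵥ u ⬝ᵥ u ≤ (⨆ i, hB.eigenvalues i) * (u ⬝ᵥ u) := by
  simpa [Algebra.algebraMap_eq_smul_one, smul_mulVec] using
    mulVec_dotProduct_le_of_le (le_algebraMap_iSup_eigenvalues hB) u

end Rayleigh

section ComplexForm

variable {m n : Type*} [Fintype n]

/-- The Hermitian form `⟨Av, v⟩` of a real matrix `A` at a complex vector `v`, antilinear in its
second argument. -/
noncomputable def complexForm (A : Matrix n n ℝ) (v : n → ℂ) : ℂ :=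
  A.map Complex.ofReal *ᵥ v ⬝ᵥ star v

theorem complexForm_add (A B : Matrix n n ℝ) (v : n → ℂ) :
    complexForm (A + B) v = complexForm A v + complexForm B v := by
  rw [complexForm, Matrix.map_add _ Complex.ofReal_add, add_mulVec, add_dotProduct]
  rfl

theorem complexForm_smul (c : ℝ) (A : Matrix n n ℝ) (v : n → ℂ) :
    complexForm (c • A) v = c * complexForm A v := by
  have hmap : (c • A).map Complex.ofReal = (c : ℂ) • A.map Complex.ofReal := by ext; simp
  rw [complexForm, hmap, smul_mulVec, smul_dotProduct, smul_eq_mul, complexForm]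

theorem complexForm_mul_of_mulVec_eq_smul (K : Matrix n n ℝ) {M : Matrix n n ℝ} {μ : ℂ}
    {v : n → ℂ} (h : M.map Complex.ofReal *ᵥ v = μ • v) :
    complexForm (K * M) v = μ * complexForm K v := by
  have hmap : (K * M).map Complex.ofReal = K.map Complex.ofReal * M.map Complex.ofReal :=
    Matrix.map_mul (f := Complex.ofRealHom)
  rw [complexForm, hmap, ← mulVec_mulVec, h, mulVec_smul, smul_dotProduct, smul_eq_mul, complexForm]

theorem map_ofReal_mulVec_re (A : Matrix m n ℝ) (v : n → ℂ) (i : m) :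
    ((A.map Complex.ofReal *ᵥ v) i).re = (A *ᵥ (Complex.re ∘ v)) i := by
  simp [mulVec, dotProduct]

theorem map_ofReal_mulVec_im (A : Matrix m n ℝ) (v : n → ℂ) (i : m) :
    ((A.map Complex.ofReal *ᵥ v) i).im = (A *ᵥ (Complex.im ∘ v)) i := by
  simp [mulVec, dotProduct]

theorem complexForm_re (A : Matrix n n ℝ) (v : n → ℂ) :
    (complexForm A v).re =
      A *ᵥ (Complex.re ∘ v) ⬝ᵥ (Complex.re ∘ v) + A *ᵥ (Complex.im ∘ v) ⬝ᵥ (Complex.im ∘ v) := by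
  simp [complexForm, dotProduct, map_ofReal_mulVec_re, map_ofReal_mulVec_im, Finset.sum_add_distrib]

theorem complexForm_im (A : Matrix n n ℝ) (v : n → ℂ) :
    (complexForm A v).im = (A - Aᵀ) *ᵥ (Complex.im ∘ v) ⬝ᵥ (Complex.re ∘ v) := by
  have himag : (complexForm A v).im =
      A *ᵥ (Complex.im ∘ v) ⬝ᵥ (Complex.re ∘ v) - A *ᵥ (Complex.re ∘ v) ⬝ᵥ (Complex.im ∘ v) := by
    simp [complexForm, dotProduct, map_ofReal_mulVec_re, map_ofReal_mulVec_im, neg_add_eq_sub]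
  rw [himag, sub_mulVec, sub_dotProduct, dotProduct_comm (Aᵀ *ᵥ _), dotProduct_transpose_mulVec,
    dotProduct_comm (A *ᵥ (Complex.re ∘ v))]

theorem complexForm_re_pos {B : Matrix n n ℝ} (hB : B.PosDef) {v : n → ℂ} (hv : v ≠ 0) :
    0 < (complexForm B v).re := by
  have hnonneg (u : n → ℝ) : 0 ≤ B *ᵥ u ⬝ᵥ u := by
    simpa [dotProduct_comm] using hB.posSemidef.dotProduct_mulVec_nonneg u
  have hpos {u : n → ℝ} (hu : u ≠ 0) : 0 < B *ᵥ u ⬝ᵥ u := by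
    simpa [dotProduct_comm] using hB.dotProduct_mulVec_pos hu
  rw [complexForm_re]
  by_cases hre : Complex.re ∘ v = 0
  · have him : Complex.im ∘ v ≠ 0 := fun him ↦
      hv (funext fun i ↦ Complex.ext (congrFun hre i) (congrFun him i))
    exact add_pos_of_nonneg_of_pos (hnonneg _) (hpos him)
  · exact add_pos_of_pos_of_nonneg (hpos hre) (hnonneg _)

theorem posDef_of_complexForm_re_pos {K : Matrix n n ℝ} (hK : K.IsHermitian)
    (h : ∀ v : n → ℂ, v ≠ 0 → 0 < (complexForm K v).re) : K.PosDef := by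
  refine .of_dotProduct_mulVec_pos hK fun u hu ↦ ?_
  have hv : Complex.ofReal ∘ u ≠ 0 := fun hv ↦
    hu (funext fun i ↦ Complex.ofReal_injective (congrFun hv i))
  have hre : Complex.re ∘ Complex.ofReal ∘ u = u := rfl
  have him : Complex.im ∘ Complex.ofReal ∘ u = 0 := rfl
  simpa [complexForm_re, hre, him, dotProduct_comm] using h _ hv

theorem complexForm_im_eq_zero {A : Matrix n n ℝ} (hA : A.IsHermitian) (v : n → ℂ) :
    (complexForm A v).im = 0 := by
  have hAT : Aᵀ = A := by rw [← conjTranspose_eq_transpose_of_trivial, hA.eq]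
  rw [complexForm_im, hAT, sub_self, zero_mulVec, zero_dotProduct]

variable [DecidableEq n]

theorem complexForm_one_re_pos {v : n → ℂ} (hv : v ≠ 0) : 0 < (complexForm 1 v).re :=
  complexForm_re_pos .one hv

theorem complexForm_re_div_mem_Icc {B : Matrix n n ℝ} (hB : B.IsHermitian) {v : n → ℂ}
    (hv : v ≠ 0) : (complexForm B v).re / (complexForm 1 v).re ∈
      Set.Icc (⨅ i, hB.eigenvalues i) (⨆ i, hB.eigenvalues i) := by
  have hq := complexForm_one_re_pos hv
  rw [Set.mem_Icc, le_div_iff₀ hq, div_le_iff₀ hq]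
  simp only [complexForm_re, one_mulVec, mul_add]
  exact ⟨add_le_add (iInf_eigenvalues_mul_dotProduct_le_s14 hB _)
      (iInf_eigenvalues_mul_dotProduct_le_s14 hB _),
    add_le_add (mulVec_dotProduct_le_iSup_eigenvalues_mul hB _)
      (mulVec_dotProduct_le_iSup_eigenvalues_mul hB _)⟩

section OperatorNorm

open scoped Matrix.Norms.L2Operator

theorem norm_mulVec_dotProduct_star_le {𝕜 : Type*} [RCLike 𝕜] [Fintype m] (C : Matrix m n 𝕜)
    (x : n → 𝕜) (y : m → 𝕜) :
    ‖C *ᵥ x ⬝ᵥ star y‖ ≤ ‖C‖ * ‖WithLp.toLp 2 x‖ * ‖WithLp.toLp 2 y‖ := by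
  calc ‖C *ᵥ x ⬝ᵥ star y‖ ≤ ‖WithLp.toLp 2 y‖ * ‖WithLp.toLp 2 (C *ᵥ x)‖ := by
        rw [← EuclideanSpace.inner_toLp_toLp]
        exact norm_inner_le_norm _ _
    _ ≤ ‖WithLp.toLp 2 y‖ * (‖C‖ * ‖WithLp.toLp 2 x‖) := by
        gcongr
        exact C.l2_opNorm_mulVec (WithLp.toLp 2 x)
    _ = ‖C‖ * ‖WithLp.toLp 2 x‖ * ‖WithLp.toLp 2 y‖ := by ring

theorem abs_complexForm_im_le (A : Matrix n n ℝ) (v : n → ℂ) :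
    |(complexForm A v).im| ≤ ‖A - Aᵀ‖ / 2 * (complexForm 1 v).re := by
  have hnorm (u : n → ℝ) : u ⬝ᵥ u = ‖WithLp.toLp 2 u‖ ^ 2 := by
    rw [← real_inner_self_eq_norm_sq, EuclideanSpace.inner_toLp_toLp, star_trivial]
  have hbilin := norm_mulVec_dotProduct_star_le (A - Aᵀ) (Complex.im ∘ v) (Complex.re ∘ v)
  rw [star_trivial, Real.norm_eq_abs] at hbilin
  rw [complexForm_im, complexForm_re, one_mulVec, one_mulVec, hnorm, hnorm]
  calc |(A - Aᵀ) *ᵥ (Complex.im ∘ v) ⬝ᵥ (Complex.re ∘ v)|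
      ≤ ‖A - Aᵀ‖ / 2 *
          (2 * ‖WithLp.toLp 2 (Complex.re ∘ v)‖ * ‖WithLp.toLp 2 (Complex.im ∘ v)‖) := by
        linarith
    _ ≤ ‖A - Aᵀ‖ / 2 *
          (‖WithLp.toLp 2 (Complex.re ∘ v)‖ ^ 2 + ‖WithLp.toLp 2 (Complex.im ∘ v)‖ ^ 2) := by
        gcongr
        exact two_mul_le_add_sq _ _

end OperatorNorm

end ComplexForm

section RSS

variable {n : Type*} [Fintype n] [DecidableEq n]

/-- The iteration matrix `M = I - Δt (I + τ Δt B)⁻¹ A` of the RSS scheme. The inverse is Mathlib's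
total one, which is zero if `I + τ Δt B` is singular. -/
noncomputable def rssIterationMatrix (A B : Matrix n n ℝ) (τ Δt : ℝ) : Matrix n n ℝ :=
  1 - Δt • ((1 + (τ * Δt) • B)⁻¹ * A)

variable {A B : Matrix n n ℝ} {α β τ δ Δt : ℝ}

theorem mul_rssIterationMatrix_add_smul (hK : IsUnit (1 + (τ * Δt) • B).det) :
    (1 + (τ * Δt) • B) * rssIterationMatrix A B τ Δt + Δt • A = 1 + (τ * Δt) • B := by
  rw [rssIterationMatrix, mul_sub, mul_one, mul_smul_comm, mul_nonsing_inv_cancel_left _ _ hK,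
    sub_add_cancel]

theorem mul_complexForm_eq_one_sub_mul (hK : IsUnit (1 + (τ * Δt) • B).det) {μ : ℂ} {v : n → ℂ}
    (h : (rssIterationMatrix A B τ Δt).map Complex.ofReal *ᵥ v = μ • v) :
    Δt * complexForm A v = (1 - μ) * complexForm (1 + (τ * Δt) • B) v := by
  have hform := congrArg (complexForm · v) (mul_rssIterationMatrix_add_smul (A := A) hK)
  simp only [complexForm_add _ (Δt • A), complexForm_smul,
    complexForm_mul_of_mulVec_eq_smul _ h] at hform
  linear_combination hform

theorem mul_rssPhi_complexForm_re_div_lt (hB : B.PosDef) (hΔt : 0 ≤ Δt)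
    (hmin : Δt * rssPhi α β τ δ (⨅ i, hB.1.eigenvalues i) < 2 * α)
    (hmax : Δt * rssPhi α β τ δ (⨆ i, hB.1.eigenvalues i) < 2 * α) {v : n → ℂ} (hv : v ≠ 0) :
    Δt * rssPhi α β τ δ ((complexForm B v).re / (complexForm 1 v).re) < 2 * α := by
  obtain ⟨i, -⟩ := Function.ne_iff.1 hv
  have : Nonempty n := ⟨i⟩
  exact mul_rssPhi_lt_of_mem_Icc (iInf_eigenvalues_pos hB) (complexForm_re_div_mem_Icc hB.1 hv)
    hΔt hmin hmax

theorem complexForm_one_add_smul (hB : B.IsHermitian) (c : ℝ) (v : n → ℂ) :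
    complexForm (1 + c • B) v =
      ((complexForm 1 v).re + c * (complexForm B v).re : ℝ) := by
  rw [complexForm_add, complexForm_smul]
  apply Complex.ext <;>
    simp [complexForm_im_eq_zero isHermitian_one, complexForm_im_eq_zero hB]

theorem posDef_one_add_smul_of_mul_rssPhi_lt (hB : B.PosDef) (hα : 0 < α) (hΔt : 0 ≤ Δt)
    (hmin : Δt * rssPhi α β τ δ (⨅ i, hB.1.eigenvalues i) < 2 * α)
    (hmax : Δt * rssPhi α β τ δ (⨆ i, hB.1.eigenvalues i) < 2 * α) :
    (1 + (τ * Δt) • B).PosDef := by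
  have hherm : (1 + (τ * Δt) • B).IsHermitian :=
    isHermitian_one.add (hB.1.smul (IsSelfAdjoint.all _))
  refine posDef_of_complexForm_re_pos hherm fun v hv ↦ ?_
  rw [complexForm_one_add_smul hB.1, Complex.ofReal_re]
  exact add_mul_pos_of_mul_rssPhi_lt hα hΔt (complexForm_one_re_pos hv) (complexForm_re_pos hB hv)
    (mul_rssPhi_complexForm_re_div_lt hB hΔt hmin hmax hv)

open scoped Matrix.Norms.L2Operator in
theorem rss_general_stability_nonsymmetric_general (hB : B.PosDef) (hα : 0 < α)
    (hlow : ∀ u, α * (B *ᵥ u ⬝ᵥ u) ≤ A *ᵥ u ⬝ᵥ u) (hup : ∀ u, A *ᵥ u ⬝ᵥ u ≤ β * (B *ᵥ u ⬝ᵥ u))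
    (hΔt : 0 < Δt)
    (hmin : Δt * rssPhi α β τ ‖A - Aᵀ‖ (⨅ i, hB.1.eigenvalues i) < 2 * α)
    (hmax : Δt * rssPhi α β τ ‖A - Aᵀ‖ (⨆ i, hB.1.eigenvalues i) < 2 * α)
    {μ : ℂ} {v : n → ℂ} (hv : v ≠ 0)
    (hμ : (rssIterationMatrix A B τ Δt).map Complex.ofReal *ᵥ v = μ • v) : ‖μ‖ < 1 := by
  have hK := posDef_one_add_smul_of_mul_rssPhi_lt hB hα hΔt.le hmin hmax
  have hform := mul_complexForm_eq_one_sub_mul ((isUnit_iff_isUnit_det _).1 hK.isUnit) hμ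
  rw [complexForm_one_add_smul hB.1] at hform
  have hlow' : α * (complexForm B v).re ≤ (complexForm A v).re := by
    rw [complexForm_re, complexForm_re, mul_add]
    exact add_le_add (hlow _) (hlow _)
  have hup' : (complexForm A v).re ≤ β * (complexForm B v).re := by
    rw [complexForm_re, complexForm_re, mul_add]
    exact add_le_add (hup _) (hup _)
  exact norm_lt_one_of_mul_eq_one_sub_mul hΔt hform <|
    mul_normSq_lt_of_mul_rssPhi_lt hα hΔt.le (complexForm_one_re_pos hv) (complexForm_re_pos hB hv)
      (mul_rssPhi_complexForm_re_div_lt hB hΔt.le hmin hmax hv) hlow' hup'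
      (abs_complexForm_im_le A v)

end RSS

/-- general stability of RSS for a nonsymmetric positive definite
matrix `A`. With `δ = ‖A − Aᵀ‖` and `Φ(ξ) = (β² − 2ατ)ξ + δ²/(4ξ)`, if
`Δt·Φ(λ_min(B)) < 2α` and `Δt·Φ(λ_max(B)) < 2α`, then every complex eigenvalue
`μ` of `M = I − Δt (I + τΔt B)⁻¹ A` satisfies `|μ| < 1`. -/
theorem rss_general_stability_nonsymmetric
    {N : ℕ} (hN : 0 < N) (A B : Matrix (Fin N) (Fin N) ℝ)
    (hApos : ∀ u : Fin N → ℝ, u ≠ 0 → 0 < A.mulVec u ⬝ᵥ u)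
    (hB : B.PosDef)
    (α β : ℝ) (hα : 0 < α) (hαβ : α ≤ β)
    (hlow : ∀ u : Fin N → ℝ, α * (B.mulVec u ⬝ᵥ u) ≤ A.mulVec u ⬝ᵥ u)
    (hup : ∀ u : Fin N → ℝ, A.mulVec u ⬝ᵥ u ≤ β * (B.mulVec u ⬝ᵥ u))
    (τ Δt : ℝ) (hτ : 0 < τ) (hΔt : 0 < Δt)
    (hmin : Δt * ((β ^ 2 - 2 * α * τ) * (⨅ i, hB.1.eigenvalues i) +
        (mopNorm (A - Aᵀ)) ^ 2 / (4 * (⨅ i, hB.1.eigenvalues i))) < 2 * α)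
    (hmax : Δt * ((β ^ 2 - 2 * α * τ) * (⨆ i, hB.1.eigenvalues i) +
        (mopNorm (A - Aᵀ)) ^ 2 / (4 * (⨆ i, hB.1.eigenvalues i))) < 2 * α) :
    ∀ (μ : ℂ) (v : Fin N → ℂ), v ≠ 0 →
      (((1 : Matrix (Fin N) (Fin N) ℝ) -
          Δt • (((1 : Matrix (Fin N) (Fin N) ℝ) + (τ * Δt) • B)⁻¹ * A)).map
        (Complex.ofReal ·)).mulVec v = μ • v →
      ‖μ‖ < 1 := by
  intro μ v hv hμ
  exact rss_general_stability_nonsymmetric_general hB hα hlow hup hΔt hmin hmax hv hμ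
end

section
/- Let μ = a + ib (a, b ∈ ℝ) be a complex eigenvalue of M = I − Δt (I + τΔt B)⁻¹ A with eigenvector v = v₁ + i·v₂, where v₁, v₂ ∈ ℝ^N are not both zero. Set N₀ = ‖v₁‖² + ‖v₂‖² + τΔt·(⟨Bv₁,v₁⟩ + ⟨Bv₂,v₂⟩). Then (1 − a)·N₀ = Δt·(⟨Av₁,v₁⟩ + ⟨Av₂,v₂⟩) and b·N₀ = Δt·⟨(A − Aᵀ)v₁, v₂⟩. -/
open Matrix

/-!
Write `S = 1 + τΔt B`, `K = Δt A` and `v = v₁ + i v₂`. The eigenvalue equation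
`(1 - S⁻¹ K) v = μ v` is the generalized eigenvalue equation `K v = (1 - μ) S v`, hence
`v* K v = (1 - μ) v* S v`. For a real matrix `X`, the real part of `v* X v` is
`⟨X v₁, v₁⟩ + ⟨X v₂, v₂⟩` and its imaginary part is `-⟨(X - Xᵀ) v₁, v₂⟩`. Since `S` is symmetric,
`v* S v` is the real number `N₀`, and the two identities are the real and imaginary parts of
`v* K v = (1 - μ) N₀`.
-/

/-- The complex vector `x + i y` with real part `x` and imaginary part `y`, through which a complex
eigenvector of a real matrix is described by two real vectors. -/
def complexVec {n : Type*} (x y : n → ℝ) : n → ℂ :=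
  fun k => (x k : ℂ) + (y k : ℂ) * Complex.I

theorem map_mulVec_eq_one_sub_smul_of_one_sub_inv_mul {n R R' : Type*} [Fintype n]
    [DecidableEq n] [CommRing R] [CommRing R'] (f : R →+* R') {S K : Matrix n n R}
    (hS : IsUnit S) {μ : R'} {v : n → R'}
    (hv : (1 - S⁻¹ * K).map f *ᵥ v = μ • v) :
    K.map f *ᵥ v = (1 - μ) • (S.map f *ᵥ v) := by
  have hK : K = S - S * (1 - S⁻¹ * K) := by
    rw [mul_sub, mul_one, mul_nonsing_inv_cancel_left _ _ ((isUnit_iff_isUnit_det S).mp hS),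
      sub_sub_cancel]
  calc K.map f *ᵥ v = (S - S * (1 - S⁻¹ * K)).map f *ᵥ v := by rw [← hK]
    _ = S.map f *ᵥ v - S.map f *ᵥ ((1 - S⁻¹ * K).map f *ᵥ v) := by
      rw [Matrix.map_sub f (map_sub f), Matrix.map_mul, sub_mulVec, mulVec_mulVec]
    _ = (1 - μ) • (S.map f *ᵥ v) := by rw [hv, mulVec_smul, sub_smul, one_smul]

section QuadraticForm

variable {n : Type*} [Fintype n]

theorem map_ofReal_mulVec_complexVec {m : Type*} (A : Matrix m n ℝ) (x y : n → ℝ) :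
    A.map Complex.ofRealHom *ᵥ complexVec x y = complexVec (A *ᵥ x) (A *ᵥ y) := by
  ext k
  simp [complexVec, mulVec, dotProduct, mul_add, Finset.sum_add_distrib, Finset.sum_mul, mul_assoc]

theorem star_complexVec_dotProduct_complexVec (x y z w : n → ℝ) :
    star (complexVec x y) ⬝ᵥ complexVec z w =
      ⟨z ⬝ᵥ x + w ⬝ᵥ y, w ⬝ᵥ x - z ⬝ᵥ y⟩ := by
  apply Complex.ext <;>
    simp [complexVec, dotProduct, Finset.sum_add_distrib, mul_comm, neg_add_eq_sub]

theorem star_complexVec_dotProduct_map_ofReal_mulVec (A : Matrix n n ℝ) (x y : n → ℝ) :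
    star (complexVec x y) ⬝ᵥ (A.map Complex.ofRealHom *ᵥ complexVec x y) =
      ⟨A *ᵥ x ⬝ᵥ x + A *ᵥ y ⬝ᵥ y, -((A - Aᵀ) *ᵥ x ⬝ᵥ y)⟩ := by
  rw [map_ofReal_mulVec_complexVec, star_complexVec_dotProduct_complexVec, sub_mulVec,
    sub_dotProduct, neg_sub, dotProduct_comm (Aᵀ *ᵥ x), dotProduct_transpose_mulVec,
    dotProduct_comm x]

theorem one_sub_inv_mul_eigenvalue_identities [DecidableEq n] {S K : Matrix n n ℝ}
    (hS : S.IsSymm) (hSu : IsUnit S) {μ : ℂ} {x y : n → ℝ}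
    (heig : (1 - S⁻¹ * K).map Complex.ofRealHom *ᵥ complexVec x y = μ • complexVec x y) :
    (1 - μ.re) * (S *ᵥ x ⬝ᵥ x + S *ᵥ y ⬝ᵥ y) = K *ᵥ x ⬝ᵥ x + K *ᵥ y ⬝ᵥ y ∧
      μ.im * (S *ᵥ x ⬝ᵥ x + S *ᵥ y ⬝ᵥ y) = (K - Kᵀ) *ᵥ x ⬝ᵥ y := by
  have hform := congrArg (star (complexVec x y) ⬝ᵥ ·)
    (map_mulVec_eq_one_sub_smul_of_one_sub_inv_mul Complex.ofRealHom hSu heig)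
  simp only [dotProduct_smul, star_complexVec_dotProduct_map_ofReal_mulVec, hS.eq, sub_self,
    zero_mulVec, zero_dotProduct, neg_zero, smul_eq_mul] at hform
  have hre := congrArg Complex.re hform
  have him := congrArg Complex.im hform
  simp only [Complex.mul_re, Complex.mul_im, Complex.sub_re, Complex.sub_im, Complex.one_re,
    Complex.one_im, mul_zero, sub_zero, zero_sub, zero_add, neg_mul, neg_inj] at hre him
  exact ⟨hre.symm, him.symm⟩

end QuadraticForm

theorem rss_eigenvalue_identities_general
    {n : Type*} [Fintype n] [DecidableEq n] (A B : Matrix n n ℝ) (hB : B.IsSymm)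
    (τ Δt : ℝ) (hS : IsUnit (1 + (τ * Δt) • B))
    (a b : ℝ) (v₁ v₂ : n → ℝ)
    (heig : ((1 - Δt • ((1 + (τ * Δt) • B)⁻¹ * A)).map (Complex.ofReal ·)).mulVec
        (fun k => (v₁ k : ℂ) + (v₂ k : ℂ) * Complex.I) =
      ((a : ℂ) + (b : ℂ) * Complex.I) •
        (fun k => (v₁ k : ℂ) + (v₂ k : ℂ) * Complex.I)) :
    (1 - a) * (v₁ ⬝ᵥ v₁ + v₂ ⬝ᵥ v₂ + τ * Δt * (B *ᵥ v₁ ⬝ᵥ v₁ + B *ᵥ v₂ ⬝ᵥ v₂)) =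
      Δt * (A *ᵥ v₁ ⬝ᵥ v₁ + A *ᵥ v₂ ⬝ᵥ v₂) ∧
    b * (v₁ ⬝ᵥ v₁ + v₂ ⬝ᵥ v₂ + τ * Δt * (B *ᵥ v₁ ⬝ᵥ v₁ + B *ᵥ v₂ ⬝ᵥ v₂)) =
      Δt * ((A - Aᵀ) *ᵥ v₁ ⬝ᵥ v₂) := by
  have hSymm : (1 + (τ * Δt) • B).IsSymm := isSymm_one.add (hB.smul _)
  have hN₀ : (1 + (τ * Δt) • B) *ᵥ v₁ ⬝ᵥ v₁ + (1 + (τ * Δt) • B) *ᵥ v₂ ⬝ᵥ v₂ =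
      v₁ ⬝ᵥ v₁ + v₂ ⬝ᵥ v₂ + τ * Δt * (B *ᵥ v₁ ⬝ᵥ v₁ + B *ᵥ v₂ ⬝ᵥ v₂) := by
    simp only [add_mulVec, one_mulVec, smul_mulVec, add_dotProduct, smul_dotProduct, smul_eq_mul]
    ring
  rw [← Matrix.mul_smul] at heig
  simpa [hN₀, smul_mulVec, transpose_smul, ← smul_sub, mul_add] using
    one_sub_inv_mul_eigenvalue_identities hSymm hS heig

/-- real/imaginary part identities for a complex eigenvalue
`μ = a + ib` of the RSS iteration matrix `M = I − Δt (I + τΔt B)⁻¹ A` with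
eigenvector `v = v₁ + i v₂`. With
`N₀ = ‖v₁‖² + ‖v₂‖² + τΔt(⟨Bv₁,v₁⟩ + ⟨Bv₂,v₂⟩)`, one has
`(1 − a)·N₀ = Δt·(⟨Av₁,v₁⟩ + ⟨Av₂,v₂⟩)` and `b·N₀ = Δt·⟨(A − Aᵀ)v₁, v₂⟩`. -/
theorem rss_eigenvalue_identities
    {N : ℕ} (hN : 0 < N) (A B : Matrix (Fin N) (Fin N) ℝ)
    (hB : B.PosDef)
    (τ Δt : ℝ) (hτ : 0 < τ) (hΔt : 0 < Δt)
    (a b : ℝ) (v₁ v₂ : Fin N → ℝ) (hv : ¬(v₁ = 0 ∧ v₂ = 0))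
    (heig : (((1 : Matrix (Fin N) (Fin N) ℝ) -
        Δt • (((1 : Matrix (Fin N) (Fin N) ℝ) + (τ * Δt) • B)⁻¹ * A)).map
          (Complex.ofReal ·)).mulVec
        (fun k => (v₁ k : ℂ) + (v₂ k : ℂ) * Complex.I) =
      ((a : ℂ) + (b : ℂ) * Complex.I) •
        (fun k => (v₁ k : ℂ) + (v₂ k : ℂ) * Complex.I)) :
    (1 - a) * (v₁ ⬝ᵥ v₁ + v₂ ⬝ᵥ v₂ +
        τ * Δt * (B.mulVec v₁ ⬝ᵥ v₁ + B.mulVec v₂ ⬝ᵥ v₂)) =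
      Δt * (A.mulVec v₁ ⬝ᵥ v₁ + A.mulVec v₂ ⬝ᵥ v₂) ∧
    b * (v₁ ⬝ᵥ v₁ + v₂ ⬝ᵥ v₂ +
        τ * Δt * (B.mulVec v₁ ⬝ᵥ v₁ + B.mulVec v₂ ⬝ᵥ v₂)) =
      Δt * ((A - Aᵀ).mulVec v₁ ⬝ᵥ v₂) := by
  have hS : (1 + (τ * Δt) • B).PosDef := PosDef.one.add (hB.smul (mul_pos hτ hΔt))
  exact rss_eigenvalue_identities_general A B (isHermitian_iff_isSymm.mp hB.isHermitian) τ Δt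
    hS.isUnit a b v₁ v₂ heig
end
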